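/- arXiv:math/0205040 — 9 statements merged into one kernel-verified Lean document; each statement's English description precedes it below -/
import Mathlib

section
/- The third term γ₃(B(4,3)) of the lower central series of B(4,3) is contained in the center of B(4,3). -/
/-- The free Burnside group `B(4,3)` of exponent 3 on four generators:
the free group on four generators modulo the normal closure of all cubes. -/
abbrev B43 : Type :=
  FreeGroup (Fin 4) ⧸ Subgroup.normalClosure {w : FreeGroup (Fin 4) | ∃ v, w = v ^ 3}

namespace Exp3

open scoped commutatorElement

theorem ring_facts {G R : Type*} [Group G] [Ring R] (ρ : G →* R)
    (h : ∀ g, (ρ g - 1) * (ρ g - 1) = 0) (y z : G) :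
    (ρ y - 1) * (ρ z - 1) = -((ρ z - 1) * (ρ y - 1)) ∧
    ρ ⁅y, z⁆ - 1 = (ρ y - 1) * (ρ z - 1) + (ρ y - 1) * (ρ z - 1) := by
  obtain ⟨Y, hY⟩ : ∃ Y, Y = ρ y - 1 := ⟨_, rfl⟩
  obtain ⟨Z, hZ⟩ : ∃ Z, Z = ρ z - 1 := ⟨_, rfl⟩
  have hy : ρ y = 1 + Y := by rw [hY]; abel
  have hz : ρ z = 1 + Z := by rw [hZ]; abel
  have hYY : Y * Y = 0 := by rw [hY]; exact h y
  have hZZ : Z * Z = 0 := by rw [hZ]; exact h z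
  have key : Y * Z + Z * Y + Z * Y * Z + Y * Z * Y + Y * Z * Y * Z = 0 := by
    have h1 := h (y * z)
    rw [map_mul, hy, hz] at h1
    have h2 : ((1 + Y) * (1 + Z) - 1) * ((1 + Y) * (1 + Z) - 1) =
      Y * Z + Z * Y + Z * Y * Z + Y * Z * Y + Y * Z * Y * Z
        + (Y * Y + Z * Z + Y * Y * Z + Y * (Z * Z)) := by noncomm_ring
    rw [h2, hYY, hZZ] at h1
    simpa using h1
  have k1 : Y * Z * Y + Y * Z * Y * Z = 0 := by
    have : Y * (Y * Z + Z * Y + Z * Y * Z + Y * Z * Y + Y * Z * Y * Z) =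
      (Y * Z * Y + Y * Z * Y * Z) + (Y * Y) * (Z + Z * Y + Z * Y * Z) := by noncomm_ring
    rw [key, hYY] at this
    simpa using this.symm
  have k2 : Z * Y * Z + Y * Z * Y * Z = 0 := by
    have : (Y * Z + Z * Y + Z * Y * Z + Y * Z * Y + Y * Z * Y * Z) * Z =
      (Z * Y * Z + Y * Z * Y * Z) + (Y + Z * Y + Y * Z * Y) * (Z * Z) := by noncomm_ring
    rw [key, hZZ] at this
    simpa using this.symm
  have k3 : Y * Z + Z * Y = Y * Z * Y * Z := by
    have : Y * Z + Z * Y + Z * Y * Z + Y * Z * Y + Y * Z * Y * Z + Y * Z * Y * Z =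
      Y * Z + Z * Y + (Z * Y * Z + Y * Z * Y * Z) + (Y * Z * Y + Y * Z * Y * Z) := by abel
    rw [key, k1, k2] at this
    simpa using this.symm
  have k4 : Y * Z * Y = 0 := by
    have : Y * (Y * Z + Z * Y) = Y * (Y * Z * Y * Z) := by rw [k3]
    simpa [mul_add, ← mul_assoc, hYY] using this
  have k5 : Y * Z = -(Z * Y) := by
    rw [k4] at k3
    rw [eq_neg_iff_add_eq_zero, k3, zero_mul]
  refine ⟨by rw [← hY, ← hZ]; exact k5, ?_⟩
  rw [← hY, ← hZ]
  have k6 : Y * Z * Z = 0 := by rw [mul_assoc, hZZ, mul_zero]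
  have e1 : ρ ⁅y, z⁆ * ρ (z * y) = ρ (y * z) := by
    rw [← map_mul]; congr 1; rw [commutatorElement_def]; group
  have e2 : (1 + Y * Z + Y * Z) * ρ (z * y) = ρ (y * z) := by
    rw [map_mul, map_mul, hy, hz]
    have hZY : Z * Y = -(Y * Z) := by rw [k5, neg_neg]
    have : (1 + Y * Z + Y * Z) * ((1 + Z) * (1 + Y)) =
      1 + Z + Y + Z * Y + (Y * Z + Y * Z) + (Y * Z * Z + Y * Z * Z)
      + (Y * Z * Y + Y * Z * Y) + (Y * Z * Z + Y * Z * Z) * Y := by noncomm_ring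
    rw [this, k4, k6, hZY]
    noncomm_ring
  have hu : ρ (z * y) * ρ (z * y)⁻¹ = 1 := by rw [← map_mul]; simp
  have e3 : ρ ⁅y, z⁆ = 1 + Y * Z + Y * Z := by
    calc ρ ⁅y, z⁆ = ρ ⁅y, z⁆ * (ρ (z * y) * ρ (z * y)⁻¹) := by rw [hu, mul_one]
      _ = (1 + Y * Z + Y * Z) * (ρ (z * y) * ρ (z * y)⁻¹) := by
        rw [← mul_assoc, e1, ← e2, mul_assoc]
      _ = _ := by rw [hu, mul_one]
  rw [e3]; abel

variable {G : Type*} [Group G]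

theorem comm_conj (h3 : ∀ g : G, g ^ 3 = 1) (x y : G) :
    Commute x (y * x * y⁻¹) := by
  have sq : ∀ g : G, g * g = g⁻¹ := fun g => by
    rw [eq_inv_iff_mul_eq_one, ← h3 g, pow_three']
  have a : ∀ x y : G, x * y * x = y⁻¹ * x⁻¹ * y⁻¹ := fun x y => by
    have := h3 (x * y)
    rw [pow_three'] at this
    have h : x * y * x = (x * y * (x * y) * (x * y)) * (y⁻¹ * x⁻¹ * y⁻¹) := by group
    rw [h, this, one_mul]
  have b1 : x * (y * x * y⁻¹) = y⁻¹ * x⁻¹ * y := by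
    have : x * (y * x * y⁻¹) = (x * y * x) * y⁻¹ := by group
    rw [this, a, mul_assoc, sq, inv_inv]
  have b2 : (y * x * y⁻¹) * x = y⁻¹ * x⁻¹ * y := by
    have : (y * x * y⁻¹) * x = y * (x * y⁻¹ * x) := by group
    rw [this, a, inv_inv, ← mul_assoc, ← mul_assoc, sq]
  exact b1.trans b2.symm

theorem closure_comm (h3 : ∀ g : G, g ^ 3 = 1) (a : G) :
    ∀ x ∈ Subgroup.normalClosure {a}, ∀ y ∈ Subgroup.normalClosure {a}, x * y = y * x := by
  have hs : ∀ x ∈ Group.conjugatesOfSet {a}, ∀ y ∈ Group.conjugatesOfSet {a}, x * y = y * x := by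
    intro x hx y hy
    simp only [Group.mem_conjugatesOfSet_iff, Set.mem_singleton_iff, exists_eq_left] at hx hy
    obtain ⟨c, rfl⟩ := isConj_iff.1 hx
    obtain ⟨d, rfl⟩ := isConj_iff.1 hy
    have := comm_conj h3 (c * a * c⁻¹) (d * c⁻¹)
    have e : d * c⁻¹ * (c * a * c⁻¹) * (d * c⁻¹)⁻¹ = d * a * d⁻¹ := by group
    rw [e] at this
    exact this
  intro x hx y hy
  have h1 : Subgroup.normalClosure {a} ≤ Subgroup.centralizer (Group.conjugatesOfSet {a}) := by
    rw [Subgroup.normalClosure, Subgroup.closure_le]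
    intro x hx
    rw [SetLike.mem_coe, Subgroup.mem_centralizer_iff]
    intro y hy
    exact hs y hy x hx
  have h2 : Subgroup.normalClosure {a} ≤
      Subgroup.centralizer (Subgroup.normalClosure {a} : Set G) := by
    conv_lhs => rw [Subgroup.normalClosure]
    rw [Subgroup.closure_le]
    intro x hx
    rw [SetLike.mem_coe, Subgroup.mem_centralizer_iff]
    intro y hy
    exact ((Subgroup.mem_centralizer_iff.1 (h1 hy)) x hx).symm
  exact ((Subgroup.mem_centralizer_iff.1 (h2 hx)) y hy).symm

theorem comm_facts (h3 : ∀ g : G, g ^ 3 = 1) (u y z : G) :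
    ⁅y, ⁅z, u⁆⁆ = ⁅z, ⁅y, u⁆⁆⁻¹ ∧ ⁅⁅y, z⁆, u⁆ = ⁅y, ⁅z, u⁆⁆ * ⁅y, ⁅z, u⁆⁆ := by
  let A := Subgroup.normalClosure {u}
  let _ : CommGroup A :=
    { (inferInstance : Group A) with
      mul_comm := fun x y => Subtype.ext (closure_comm h3 u x x.2 y y.2) }
  let ρ : G →* AddMonoid.End (Additive A) :=
    { toFun := fun g => MonoidHom.toAdditive (MulAut.conjNormal g : MulAut A).toMonoidHom
      map_one' := by rw [map_one]; rfl
      map_mul' := fun g h => by rw [map_mul]; rfl }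
  have hρ : ∀ g (x : A), (((ρ g - 1) (Additive.ofMul x)).toMul : G) = ⁅g, (x : G)⁆ := by
    intro g x
    rw [commutatorElement_def]
    have e : (ρ g - 1) (Additive.ofMul x) =
      Additive.ofMul ((MulAut.conjNormal g : MulAut A) x / x) := rfl
    rw [e, toMul_ofMul, div_eq_mul_inv, Subgroup.coe_mul, MulAut.conjNormal_apply, Subgroup.coe_inv]
  have hρ' : ∀ g (x : Additive A), (((ρ g - 1) x).toMul : G) = ⁅g, (x.toMul : G)⁆ :=
    fun g x => hρ g x.toMul
  have hsq : ∀ g, (ρ g - 1) * (ρ g - 1) = 0 := by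
    intro g
    ext x
    change (((ρ g - 1) ((ρ g - 1) x)).toMul : G) = 1
    rw [hρ', hρ']
    generalize ((Additive.toMul x : A) : G) = v
    rw [commutatorElement_eq_one_iff_commute]
    have := (comm_conj h3 g v)
    have h4 : ⁅g, v⁆ = g * (v * g * v⁻¹)⁻¹ := by rw [commutatorElement_def]; group
    rw [h4]
    exact (Commute.refl g).mul_right this.inv_right
  obtain ⟨f1, f2⟩ := ring_facts ρ hsq y z
  let a : Additive A := Additive.ofMul ⟨u, Subgroup.subset_normalClosure rfl⟩
  have ha : ((Additive.toMul a : A) : G) = u := rfl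
  constructor
  · have := congrArg (fun f : AddMonoid.End (Additive A) => ((f a).toMul : G)) f1
    change (((ρ y - 1) ((ρ z - 1) a)).toMul : G) = ((((ρ z - 1) ((ρ y - 1) a)).toMul : A) : G)⁻¹
      at this
    rwa [hρ', hρ', hρ', hρ', ha] at this
  · have := congrArg (fun f : AddMonoid.End (Additive A) => ((f a).toMul : G)) f2
    change (((ρ ⁅y, z⁆ - 1) a).toMul : G) =
      (((ρ y - 1) ((ρ z - 1) a)).toMul : G) * (((ρ y - 1) ((ρ z - 1) a)).toMul : G) at this
    rwa [hρ', hρ', hρ', ha] at this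

theorem comm_inv (h3 : ∀ g : G, g ^ 3 = 1) (w v : G) : ⁅w, v⁻¹⁆ = ⁅w, v⁆⁻¹ := by
  have h := (comm_conj h3 v w).inv_right.eq
  rw [commutatorElement_inv, commutatorElement_def, commutatorElement_def, inv_inv]
  have e : (w * v * w⁻¹)⁻¹ = w * v⁻¹ * w⁻¹ := by group
  rw [e] at h
  rw [← h]; group

theorem class3 (h3 : ∀ g : G, g ^ 3 = 1) (w z y a : G) : ⁅w, ⁅z, ⁅y, a⁆⁆⁆ = 1 := by
  have s1 : ∀ w z y a : G, ⁅w, ⁅z, ⁅y, a⁆⁆⁆ = ⁅z, ⁅w, ⁅y, a⁆⁆⁆⁻¹ :=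
    fun w z y a => (comm_facts h3 _ _ _).1
  have s2 : ∀ w z y a : G, ⁅w, ⁅z, ⁅y, a⁆⁆⁆ = ⁅w, ⁅y, ⁅z, a⁆⁆⁆⁻¹ := fun w z y a => by
    rw [(comm_facts h3 a z y).1, comm_inv h3]
  have s3 : ∀ w z y a : G, ⁅w, ⁅z, ⁅y, a⁆⁆⁆ = ⁅w, ⁅z, ⁅a, y⁆⁆⁆⁻¹ := fun w z y a => by
    rw [← commutatorElement_inv a y, comm_inv h3, comm_inv h3]
  have p1 := (comm_facts h3 ⁅y, a⁆ w z).2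
  have p2 := (comm_facts h3 ⁅w, z⁆ y a).2
  have e : ⁅y, ⁅a, ⁅w, z⁆⁆⁆ = ⁅w, ⁅z, ⁅y, a⁆⁆⁆ := by
    rw [s2 y a w z, s1 y w a z, s3 w y a z, s2 w y z a]
    simp
  rw [e, ← commutatorElement_inv, p1] at p2
  generalize ⁅w, ⁅z, ⁅y, a⁆⁆⁆ = t at p2
  have h := h3 t
  rw [pow_three'] at h
  have q : t * t = t⁻¹ := eq_inv_iff_mul_eq_one.2 h
  rw [q, inv_inv] at p2
  rw [← p2] at q
  simpa using q

theorem gamma3_le_center_of_cube (h3 : ∀ g : G, g ^ 3 = 1) :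
    (⊤ : Subgroup G).lowerCentralSeries 2 ≤ Subgroup.center G := by
  have hc : ∀ y a c : G, ⁅⁅y, a⁆, c⁆ ∈ Subgroup.center G := by
    intro y a c
    rw [Subgroup.mem_center_iff]
    intro w
    rw [← commutatorElement_eq_one_iff_mul_comm, ← commutatorElement_inv c, comm_inv h3,
      class3 h3, inv_one]
  have h1 : ⁅(⊤ : Subgroup G), (⊤ : Subgroup G)⁆ ≤ Subgroup.upperCentralSeries G 2 := by
    rw [Subgroup.commutator_le]
    intro y _ a _
    rw [Subgroup.mem_upperCentralSeries_succ_iff]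
    intro c
    rw [Subgroup.upperCentralSeries_one]
    exact hc y a c
  have h2 : ⁅⁅(⊤ : Subgroup G), (⊤ : Subgroup G)⁆, (⊤ : Subgroup G)⁆ ≤ Subgroup.center G := by
    rw [Subgroup.commutator_le]
    intro x hx c _
    have := (Subgroup.mem_upperCentralSeries_succ_iff).1 (h1 hx) c
    rwa [Subgroup.upperCentralSeries_one] at this
  exact h2

end Exp3

/-- The third term `γ₃(B(4,3)) = [[G,G],G]` of the lower central series of `B(4,3)`
(Mathlib: `lowerCentralSeries B43 2`) is contained in the center of `B(4,3)`. -/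
theorem gamma3_le_center : (⊤ : Subgroup B43).lowerCentralSeries 2 ≤ Subgroup.center B43 := by
  apply Exp3.gamma3_le_center_of_cube
  intro g
  obtain ⟨v, rfl⟩ := QuotientGroup.mk_surjective g
  rw [← QuotientGroup.mk_pow, QuotientGroup.eq_one_iff]
  exact Subgroup.subset_normalClosure ⟨v, rfl⟩
end

section
/- B(4,3) is nilpotent of class exactly 3: the fourth term γ₄(B(4,3)) of its lower central series is trivial, while the third term γ₃(B(4,3)) is nontrivial. -/
namespace B43Aux

open scoped commutatorElement

lemma lin_key {M : Type*} [AddCommGroup M] {o y z zy yz zi yzi w : M}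
    (r1 : o + zy + w = 0) (r2 : zi + yzi + w = 0) (r3 : o + z + zi = 0)
    (r4 : y + yz + yzi = 0) (t2 : y + y + y = 0) (t3 : z + z + z = 0) :
    (o - y + zy - z) + (o - z + yz - y) = 0 := by
  have h : (o - y + zy - z) + (o - z + yz - y) = (o + zy + w) - (zi + yzi + w) + (o + z + zi)
      + (y + yz + yzi) - (y + y + y) - (z + z + z) := by abel
  rw [h, r1, r2, r3, r4, t2, t3]
  simp

section Exponent3
variable {G : Type*} [Group G]

lemma cube_mul (h3 : ∀ g : G, g ^ 3 = 1) (a b : G) : a * b * a * b * a * b = 1 := by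
  have := h3 (a * b)
  simpa [pow_succ, mul_assoc] using this

lemma sq_eq_inv (h3 : ∀ g : G, g ^ 3 = 1) (a : G) : a * a = a⁻¹ := by
  have := h3 a
  rw [eq_inv_iff_mul_eq_one]
  simpa [pow_succ] using this

/-- Every element commutes with its conjugates. -/
lemma comm_conj (h3 : ∀ g : G, g ^ 3 = 1) (x g : G) : x * (g * x * g⁻¹) = (g * x * g⁻¹) * x := by
  have k1 : x * g * x = g⁻¹ * x⁻¹ * g⁻¹ := by
    have := cube_mul h3 x g
    rw [eq_comm, ← mul_inv_eq_one, ← inv_eq_one]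
    simpa [mul_assoc] using this
  have k2 : x * g⁻¹ * x = g * x⁻¹ * g := by
    have := cube_mul h3 x g⁻¹
    rw [eq_comm, ← mul_inv_eq_one, ← inv_eq_one]
    simpa [mul_assoc] using this
  have e := sq_eq_inv h3 g
  have e' : g⁻¹ * g⁻¹ = g := by rw [← mul_inv_rev, e, inv_inv]
  calc x * (g * x * g⁻¹) = (x * g * x) * g⁻¹ := by group
    _ = g⁻¹ * x⁻¹ * (g⁻¹ * g⁻¹) := by rw [k1]; group
    _ = (g * g) * x⁻¹ * g := by rw [e', e]
    _ = g * (g * x⁻¹ * g) := by group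
    _ = (g * x * g⁻¹) * x := by rw [← k2]; group

lemma comm_conj2 (h3 : ∀ g : G, g ^ 3 = 1) (x g k : G) :
    (g * x * g⁻¹) * (k * x * k⁻¹) = (k * x * k⁻¹) * (g * x * g⁻¹) := by
  have := comm_conj h3 (g * x * g⁻¹) (k * g⁻¹)
  have e : k * g⁻¹ * (g * x * g⁻¹) * (k * g⁻¹)⁻¹ = k * x * k⁻¹ := by group
  rwa [e] at this

lemma conj_rel (h3 : ∀ g : G, g ^ 3 = 1) (x y : G) : x * (y * x * y⁻¹) * (y⁻¹ * x * y) = 1 := by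
  have e := sq_eq_inv h3 y
  have e' : y⁻¹ * y⁻¹ = y := by rw [← mul_inv_rev, e, inv_inv]
  calc x * (y * x * y⁻¹) * (y⁻¹ * x * y) = x * y * x * (y⁻¹ * y⁻¹) * x * y := by group
    _ = 1 := by rw [e']; exact cube_mul h3 x y

lemma anti23 (h3 : ∀ g : G, g ^ 3 = 1) (x y z : G) : ⁅⁅x, y⁆, z⁆ = ⁅⁅x, z⁆, y⁆⁻¹ := by
  let S : Set G := Set.range fun g : G => g * x * g⁻¹
  have hS : ∀ a ∈ S, ∀ b ∈ S, a * b = b * a := by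
    rintro _ ⟨g, rfl⟩ _ ⟨k, rfl⟩
    exact comm_conj2 h3 x g k
  let _ : CommGroup (Subgroup.closure S) := Subgroup.closureCommGroupOfComm hS
  let c : G → Subgroup.closure S := fun g => ⟨g * x * g⁻¹, Subgroup.subset_closure ⟨g, rfl⟩⟩
  have hc : ∀ g, ((c g : Subgroup.closure S) : G) = g * x * g⁻¹ := fun _ => rfl
  let f : G → Additive (Subgroup.closure S) := fun g => Additive.ofMul (c g)
  have hm : ∀ a b : Subgroup.closure S, ((a * b : Subgroup.closure S) : G) = a * b := fun _ _ => rfl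
  have hi : ∀ a : Subgroup.closure S, ((a⁻¹ : Subgroup.closure S) : G) = (a : G)⁻¹ := fun _ => rfl
  have rel : ∀ g k, f k + f (g * k) + f (g⁻¹ * k) = 0 := by
    intro g k
    have : c k * c (g * k) * c (g⁻¹ * k) = 1 := by
      apply Subtype.ext
      rw [hm, hm, hc, hc, hc]
      have := conj_rel h3 (k * x * k⁻¹) g
      calc _ = (k * x * k⁻¹) * (g * (k * x * k⁻¹) * g⁻¹) * (g⁻¹ * (k * x * k⁻¹) * g) := by group
        _ = 1 := this
    exact this
  have r1 := rel (z * y) 1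
  have r2 := rel y z⁻¹
  have r3 := rel z 1
  have r4 := rel (y * z * y⁻¹) y
  have t := rel 1 1
  have t2 := rel 1 y
  have t3 := rel 1 z
  have e1 : (z * y)⁻¹ * 1 = y⁻¹ * z⁻¹ := by group
  have e2 : y * z * y⁻¹ * y = y * z := by group
  have e3 : (y * z * y⁻¹)⁻¹ * y = y * z⁻¹ := by group
  rw [e1] at r1
  rw [e2, e3] at r4
  simp only [mul_one, one_mul, inv_one] at r1 r2 r3 r4 t t2 t3
  have key : (f 1 - f y + f (z * y) - f z) + (f 1 - f z + f (y * z) - f y) = 0 := by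
    exact lin_key r1 r2 r3 r4 t2 t3
  have key' : (c 1 * (c y)⁻¹ * c (z * y) * (c z)⁻¹) * (c 1 * (c z)⁻¹ * c (y * z) * (c y)⁻¹) = 1 := by
    have h := key
    simp only [sub_eq_add_neg] at h
    exact h
  have key2 := congrArg (Subtype.val) key'
  simp only [hm, hi, hc] at key2
  rw [eq_inv_iff_mul_eq_one]
  have l : ∀ y z : G, ⁅⁅x, y⁆, z⁆ =
      1 * x * 1⁻¹ * (y * x * y⁻¹)⁻¹ * (z * y * x * (z * y)⁻¹) * (z * x * z⁻¹)⁻¹ := by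
    intro y z
    simp only [commutatorElement_def]
    group
  rw [l y z, l z y]
  exact key2

lemma anti12 (h3 : ∀ g : G, g ^ 3 = 1) (x y z : G) : ⁅⁅x, y⁆, z⁆ = ⁅⁅y, x⁆, z⁆⁻¹ := by
  rw [← commutatorElement_inv x y]
  generalize ⁅x, y⁆ = u
  have h := comm_conj h3 u z
  have h' : u * (z * u⁻¹ * z⁻¹) = (z * u⁻¹ * z⁻¹) * u := by
    have : Commute u (z * u * z⁻¹) := h
    have := this.inv_right
    have e : (z * u * z⁻¹)⁻¹ = z * u⁻¹ * z⁻¹ := by group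
    rw [e] at this
    exact this
  calc ⁅u, z⁆ = u * (z * u⁻¹ * z⁻¹) := by rw [commutatorElement_def]; group
    _ = (z * u⁻¹ * z⁻¹) * u := h'
    _ = ⁅u⁻¹, z⁆⁻¹ := by rw [commutatorElement_def]; group

lemma four (h3 : ∀ g : G, g ^ 3 = 1) (x y z w : G) : ⁅⁅⁅x, y⁆, z⁆, w⁆ = 1 := by
  have inv1 : ∀ u v w : G, ⁅⁅u, v⁆⁻¹, w⁆ = ⁅⁅u, v⁆, w⁆⁻¹ := by
    intro u v w
    rw [commutatorElement_inv u v, anti12 h3]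
  have s1 : ∀ x y z w : G, ⁅⁅⁅x, y⁆, z⁆, w⁆ = ⁅⁅⁅y, x⁆, z⁆, w⁆⁻¹ := by
    intro x y z w
    rw [anti12 h3 x y z, inv1]
  have s2 : ∀ x y z w : G, ⁅⁅⁅x, y⁆, z⁆, w⁆ = ⁅⁅⁅x, z⁆, y⁆, w⁆⁻¹ := by
    intro x y z w
    rw [anti23 h3 x y z, inv1]
  have s3 : ∀ x y z w : G, ⁅⁅⁅x, y⁆, z⁆, w⁆ = ⁅⁅⁅x, y⁆, w⁆, z⁆⁻¹ := fun x y z w =>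
    anti23 h3 _ z w
  have m : ∀ x y z w : G, ⁅⁅x, y⁆, ⁅z, w⁆⁆ = ⁅⁅⁅z, w⁆, x⁆, y⁆ := by
    intro x y z w
    rw [anti12 h3 x y, anti23 h3 y x, inv_inv, anti12 h3 y, s3 z w y x, inv_inv]
  have a : ⁅⁅⁅x, y⁆, z⁆, w⁆ = ⁅⁅⁅z, w⁆, x⁆, y⁆⁻¹ := by
    rw [← m x y z w, commutatorElement_inv, m z w x y]
  have b : ⁅⁅⁅z, w⁆, x⁆, y⁆ = ⁅⁅⁅x, y⁆, z⁆, w⁆ := by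
    rw [s2 z w x y, s1 z x w y, inv_inv, s3 x z w y, s2 x z y w, inv_inv]
  rw [b, eq_inv_iff_mul_eq_one, sq_eq_inv h3, inv_eq_one] at a
  exact a

end Exponent3

/-- A model of the free exponent 3 group on three generators. -/
@[ext] structure H where
  (m0 m1 m2 m3 p q r : ZMod 3)

namespace H
instance : Mul H := ⟨fun a b => ⟨a.m0 + b.m0, a.m1 + b.m1 + a.p * b.m0, a.m2 + b.m2 + a.q * b.m0,
  a.m3 + b.m3 + a.r * b.m0 + a.p * b.m2 - a.q * b.m1,
  a.p + b.p, a.q + b.q, a.r + b.r + a.p * b.q - a.q * b.p⟩⟩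
instance : One H := ⟨⟨0, 0, 0, 0, 0, 0, 0⟩⟩
instance : Inv H := ⟨fun a => a * a⟩

lemma mul_def (a b : H) : a * b = ⟨a.m0 + b.m0, a.m1 + b.m1 + a.p * b.m0, a.m2 + b.m2 + a.q * b.m0,
  a.m3 + b.m3 + a.r * b.m0 + a.p * b.m2 - a.q * b.m1,
  a.p + b.p, a.q + b.q, a.r + b.r + a.p * b.q - a.q * b.p⟩ := rfl
lemma one_def : (1 : H) = ⟨0, 0, 0, 0, 0, 0, 0⟩ := rfl
lemma inv_def (a : H) : a⁻¹ = a * a := rfl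

lemma three : (3 : ZMod 3) = 0 := rfl

lemma cube (a : H) : a * a * a = 1 := by
  ext <;> simp only [mul_def, one_def]
  · linear_combination a.m0 * three
  · linear_combination (a.m1 + a.p * a.m0) * three
  · linear_combination (a.m2 + a.q * a.m0) * three
  · linear_combination (a.m3 + a.r * a.m0 + a.p * a.m2 - a.q * a.m1) * three
  · linear_combination a.p * three
  · linear_combination a.q * three
  · linear_combination a.r * three

instance : Group H where
  mul_assoc a b c := by ext <;> simp only [mul_def] <;> ring
  one_mul a := by ext <;> simp [mul_def, one_def]
  mul_one a := by ext <;> simp [mul_def, one_def]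
  inv_mul_cancel a := cube a

lemma pow3 (a : H) : a ^ 3 = 1 := by
  rw [pow_succ, pow_two]; exact cube a

def x : H := ⟨1, 0, 0, 0, 0, 0, 0⟩
def y : H := ⟨0, 0, 0, 0, 1, 0, 0⟩
def z : H := ⟨0, 0, 0, 0, 0, 1, 0⟩

lemma ne : ⁅⁅x, y⁆, z⁆ ≠ 1 := by
  intro h
  have h1 := congrArg H.m3 h
  revert h1
  decide
end H

end B43Aux

open scoped commutatorElement


/-- `B(4,3)` is nilpotent of class exactly 3: the fourth term `γ₄` of its lower
central series is trivial (Mathlib: `lowerCentralSeries B43 3 = ⊥`, since `γ₁` has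
index `0`), while the third term `γ₃` is nontrivial. -/
theorem B43_nilpotent_class_three :
    Subgroup.lowerCentralSeries (⊤ : Subgroup B43) 3 = ⊥ ∧ Subgroup.lowerCentralSeries (⊤ : Subgroup B43) 2 ≠ ⊥ := by
  constructor
  · have h3 : ∀ g : B43, g ^ 3 = 1 := by
      intro g
      obtain ⟨w, rfl⟩ := QuotientGroup.mk_surjective g
      rw [← QuotientGroup.mk_pow, QuotientGroup.eq_one_iff]
      exact Subgroup.subset_normalClosure ⟨w, rfl⟩
    have c3 : ∀ a ∈ Subgroup.lowerCentralSeries (⊤ : Subgroup B43) 1, ∀ z w : B43, ⁅⁅a, z⁆, w⁆ = 1 := by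
      have : Subgroup.lowerCentralSeries (⊤ : Subgroup B43) 1 ≤ Subgroup.upperCentralSeries B43 2 := by
        refine Subgroup.commutator_le.2 fun x _ y _ => ?_
        rw [Subgroup.mem_upperCentralSeries_succ_iff]
        intro z
        rw [Subgroup.mem_upperCentralSeries_succ_iff]
        intro w
        exact B43Aux.four h3 x y z w
      intro a ha z w
      have h := this ha
      rw [Subgroup.mem_upperCentralSeries_succ_iff] at h
      have h := h z
      rw [Subgroup.mem_upperCentralSeries_succ_iff] at h
      exact h w
    have c2 : Subgroup.lowerCentralSeries (⊤ : Subgroup B43) 2 ≤ Subgroup.center B43 := by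
      refine Subgroup.commutator_le.2 fun a ha z _ => ?_
      rw [Subgroup.mem_center_iff]
      intro w
      exact (commutatorElement_eq_one_iff_mul_comm.1 (c3 a ha z w)).symm
    refine le_bot_iff.1 (Subgroup.commutator_le.2 fun a ha z _ => ?_)
    rw [Subgroup.mem_bot, commutatorElement_eq_one_iff_mul_comm]
    exact (Subgroup.mem_center_iff.1 (c2 ha) z).symm
  · intro h
    let φ : FreeGroup (Fin 4) →* B43Aux.H :=
      FreeGroup.lift ![B43Aux.H.x, B43Aux.H.y, B43Aux.H.z, 1]
    have hφ : Subgroup.normalClosure {w : FreeGroup (Fin 4) | ∃ v, w = v ^ 3} ≤ φ.ker := by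
      refine Subgroup.normalClosure_le_normal ?_
      rintro _ ⟨v, rfl⟩
      show φ (v ^ 3) = 1
      rw [map_pow, B43Aux.H.pow3]
    let ψ : B43 →* B43Aux.H := QuotientGroup.lift _ φ hφ
    let g : Fin 4 → B43 := fun i => QuotientGroup.mk (FreeGroup.of i)
    have hg : ∀ i, ψ (g i) = ![B43Aux.H.x, B43Aux.H.y, B43Aux.H.z, 1] i := by
      intro i
      show φ (FreeGroup.of i) = _
      exact FreeGroup.lift_apply_of
    have hm : ⁅⁅g 0, g 1⁆, g 2⁆ ∈ Subgroup.lowerCentralSeries (⊤ : Subgroup B43) 2 :=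
      Subgroup.commutator_mem_commutator
        (Subgroup.commutator_mem_commutator (Subgroup.mem_top _) (Subgroup.mem_top _))
        (Subgroup.mem_top _)
    rw [h, Subgroup.mem_bot] at hm
    have := congrArg ψ hm
    rw [map_commutatorElement, map_commutatorElement, hg, hg, hg, map_one] at this
    exact B43Aux.H.ne this
end

section
/- B(4,3) is a finite group of cardinality exactly 3¹⁴. -/
namespace B43aux

open scoped commutatorElement Pointwise

section Engel
variable {G : Type*} [Group G]

theorem comm_conj (h : ∀ x : G, x ^ 3 = 1) (x y : G) : Commute x (y * x * y⁻¹) := by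
  have hy : y * y * y = 1 := by simpa [pow_succ] using h y
  have hyi : y⁻¹ = y * y := by rw [inv_eq_iff_mul_eq_one, ← mul_assoc, hy]
  have h1 : x * (y * x * y⁻¹) * (y⁻¹ * x * y) = 1 := by
    have := h (x * y)
    have e : (x * y) ^ 3 = x * (y * x * y⁻¹) * ((y * y) * x * y) := by
      simp only [pow_succ, pow_zero]; group
    rw [e, ← hyi] at this
    exact this
  have h2 : x * (y⁻¹ * x * y) * (y * x * y⁻¹) = 1 := by
    have := h (x * y⁻¹)
    have e : (x * y⁻¹) ^ 3 = x * (y⁻¹ * x * y) * ((y * y)⁻¹ * x * y⁻¹) := by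
      simp only [pow_succ, pow_zero]; group
    rw [e, ← hyi, inv_inv] at this
    exact this
  generalize y * x * y⁻¹ = a at *
  generalize y⁻¹ * x * y = b at *
  have e1 : a * b = x⁻¹ := by
    rw [mul_assoc] at h1; exact (inv_eq_of_mul_eq_one_right h1).symm
  have e2 : b * a = x⁻¹ := by
    rw [mul_assoc] at h2; exact (inv_eq_of_mul_eq_one_right h2).symm
  have hab : Commute b a := e2.trans e1.symm
  have h3 : Commute (a * b) a := (Commute.refl a).mul_left hab
  rw [e1] at h3
  simpa using h3.inv_left

theorem comm_conj2 (h : ∀ x : G, x ^ 3 = 1) (x y z : G) :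
    Commute (z * x * z⁻¹) (y * x * y⁻¹) := by
  have := comm_conj h (z * x * z⁻¹) (y * z⁻¹)
  have e : y * z⁻¹ * (z * x * z⁻¹) * (y * z⁻¹)⁻¹ = y * x * y⁻¹ := by group
  rwa [e] at this

theorem comm_nc (h : ∀ x : G, x ^ 3 = 1) (x : G) {a b : G}
    (ha : a ∈ Subgroup.normalClosure {x}) (hb : b ∈ Subgroup.normalClosure {x}) :
    Commute a b := by
  have key : ∀ u ∈ Group.conjugatesOfSet {x}, ∃ z, u = z * x * z⁻¹ := by
    intro u hu
    simp only [Group.conjugatesOfSet, Set.mem_singleton_iff, Set.iUnion_iUnion_eq_left] at hu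
    obtain ⟨c, hc⟩ := isConj_iff.1 hu
    exact ⟨c, hc.symm⟩
  unfold Subgroup.normalClosure at ha hb
  induction ha, hb using Subgroup.closure_induction₂ with
  | mem u v hu hv =>
    obtain ⟨z, rfl⟩ := key u hu
    obtain ⟨w, rfl⟩ := key v hv
    exact comm_conj2 h x w z
  | one_left => exact Commute.one_left _
  | one_right => exact Commute.one_right _
  | mul_left _ _ _ _ _ _ h1 h2 => exact h1.mul_left h2
  | mul_right _ _ _ _ _ _ h1 h2 => exact h1.mul_right h2
  | inv_left _ _ _ _ h1 => exact h1.inv_left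
  | inv_right _ _ _ _ h1 => exact h1.inv_right

theorem comm_left (h : ∀ x : G, x ^ 3 = 1) (x y : G) : Commute x ⁅x, y⁆ := by
  have e : ⁅x, y⁆ = x * (y * x * y⁻¹)⁻¹ := by rw [commutatorElement_def]; group
  rw [e]
  exact (Commute.refl x).mul_right (comm_conj h x y).inv_right

theorem comm_right (h : ∀ x : G, x ^ 3 = 1) (x y : G) : Commute y ⁅x, y⁆ := by
  rw [← commutatorElement_inv]
  exact (comm_left h y x).inv_right

theorem nc_comm (x y : G) : ⁅x, y⁆ ∈ Subgroup.normalClosure {x} := by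
  have e : ⁅x, y⁆ = x * (y * x⁻¹ * y⁻¹) := by rw [commutatorElement_def]; group
  have hx : x ∈ Subgroup.normalClosure {x} := Subgroup.subset_normalClosure rfl
  rw [e]
  exact mul_mem hx (Subgroup.normalClosure_normal.conj_mem _ (inv_mem hx) _)

/-- `[u⁻¹, z] = [u, z]⁻¹` in exponent 3. -/
theorem inv_right_comm (h : ∀ x : G, x ^ 3 = 1) (z u : G) : ⁅z, u⁻¹⁆ = ⁅z, u⁆⁻¹ := by
  have c := (comm_right h z u).inv_right
  have e : ⁅z, u⁻¹⁆ = u⁻¹ * (⁅z, u⁆⁻¹ * u) := by simp only [commutatorElement_def]; group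
  rw [e, ← c.eq]; group

theorem swap_inner (h : ∀ x : G, x ^ 3 = 1) (z x y : G) : ⁅z, ⁅x, y⁆⁆ = ⁅z, ⁅y, x⁆⁆⁻¹ := by
  rw [← commutatorElement_inv y x, inv_right_comm h]

theorem swap_outer (h : ∀ x : G, x ^ 3 = 1) (z x y : G) : ⁅z, ⁅x, y⁆⁆ = ⁅y, ⁅x, z⁆⁆⁻¹ := by
  have hE : Commute (y * z) ⁅x, y * z⁆ := comm_right h x (y * z)
  have hPy : Commute y ⁅x, y⁆ := comm_right h x y
  have hpz : Commute z ⁅z, ⁅x, y⁆⁆ := comm_left h z _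
  have hQz : Commute z ⁅x, z⁆ := comm_right h x z
  have hP := nc_comm x y
  have hQ := nc_comm x z
  have e1 : ⁅x, y * z⁆ = ⁅x, y⁆ * (y * ⁅x, z⁆ * y⁻¹) := by
    simp only [commutatorElement_def]; group
  have nn : (Subgroup.normalClosure {x}).Normal := Subgroup.normalClosure_normal
  have hzq : z * ⁅y, ⁅x, z⁆⁆ * z⁻¹ ∈ Subgroup.normalClosure {x} := by
    apply nn.conj_mem
    rw [commutatorElement_def]
    exact mul_mem (nn.conj_mem _ hQ _) (inv_mem hQ)
  have hc := comm_nc h x hP hzq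
  rw [e1] at hE
  generalize ⁅x, y⁆ = P at *
  generalize ⁅x, z⁆ = Q at *
  have hp : z * P * z⁻¹ = ⁅z, P⁆ * P := by rw [commutatorElement_def]; group
  have hq : y * Q * y⁻¹ = ⁅y, Q⁆ * Q := by rw [commutatorElement_def]; group
  generalize ⁅z, P⁆ = p at *
  generalize ⁅y, Q⁆ = q at *
  -- z (P q Q) z⁻¹ = P Q
  have h1 : z * (P * (y * Q * y⁻¹)) * z⁻¹ = P * Q := by
    have := hE.eq
    have t : z * (P * (y * Q * y⁻¹)) * z⁻¹ = y⁻¹ * (y * z * (P * (y * Q * y⁻¹))) * z⁻¹ := by group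
    rw [t, this]
    have t2 : y⁻¹ * (P * (y * Q * y⁻¹) * (y * z)) * z⁻¹ = y⁻¹ * (P * y) * Q := by group
    rw [t2, ← hPy.eq]; group
  rw [hq] at h1
  have h2 : z * (P * (q * Q)) * z⁻¹ = (z * P * z⁻¹) * (z * q * z⁻¹) * (z * Q * z⁻¹) := by group
  rw [h2, hp, show z * Q * z⁻¹ = Q by rw [hQz.eq]; group] at h1
  have h3 := mul_right_cancel h1
  rw [mul_assoc, hc.eq, ← mul_assoc] at h3
  have h4 : p * (z * q * z⁻¹) = 1 := by simpa using h3
  have h5 : (z * p) * (q * z⁻¹) = 1 := by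
    rw [hpz.eq, ← h4]; group
  have h6 : p * q = 1 := by
    have : p * q = z⁻¹ * ((z * p) * (q * z⁻¹)) * z := by group
    rw [this, h5]; group
  exact eq_inv_of_mul_eq_one_left h6

theorem central (h : ∀ x : G, x ^ 3 = 1) (w z x y : G) : ⁅w, ⁅z, ⁅x, y⁆⁆⁆ = 1 := by
  have s34 : ∀ w z x y : G, ⁅w, ⁅z, ⁅x, y⁆⁆⁆ = ⁅w, ⁅z, ⁅y, x⁆⁆⁆⁻¹ := fun w z x y => by
    rw [swap_inner h z x y, inv_right_comm h]
  have s24 : ∀ w z x y : G, ⁅w, ⁅z, ⁅x, y⁆⁆⁆ = ⁅w, ⁅y, ⁅x, z⁆⁆⁆⁻¹ := fun w z x y => by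
    rw [swap_outer h z x y, inv_right_comm h]
  have s12 : ∀ w z u : G, ⁅w, ⁅z, u⁆⁆ = ⁅z, ⁅w, u⁆⁆⁻¹ := fun w z u => by
    rw [swap_outer h w z u, swap_inner h u z w, inv_inv, swap_outer h u w z]
  have e1 : ⁅w, ⁅z, ⁅x, y⁆⁆⁆ = ⁅y, ⁅x, ⁅w, z⁆⁆⁆ := by
    rw [swap_outer h w z, swap_outer h y x, ← commutatorElement_inv ⁅x, y⁆ ⁅w, z⁆,
      ← inv_right_comm h _ ⁅w, z⁆, commutatorElement_inv w z]
  have e2 : ⁅w, ⁅z, ⁅x, y⁆⁆⁆ = ⁅y, ⁅x, ⁅w, z⁆⁆⁆⁻¹ := by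
    rw [s12 w z, s24 z w, s12 z y, s34 y z, s24 y z]
    simp only [inv_inv]
  rw [← e1] at e2
  generalize ⁅w, ⁅z, ⁅x, y⁆⁆⁆ = F at *
  have h2 : F * F = 1 := by nth_rewrite 1 [e2]; simp
  have h3 := h F
  rw [pow_succ, pow_two, h2, one_mul] at h3
  exact h3

/-- there is a finite normal subgroup of order at most `3 ^ n` containing `S` -/
def Good (n : ℕ) (S : Set G) : Prop :=
  ∃ N : Subgroup G, N.Normal ∧ Finite N ∧ Nat.card N ≤ 3 ^ n ∧ S ⊆ N

theorem good_zero : Good 0 (∅ : Set G) :=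
  ⟨⊥, inferInstance, inferInstance, by simp, by simp⟩

theorem good_step (h : ∀ x : G, x ^ 3 = 1) (x : Fin 4 → G)
    (hx : Subgroup.closure (Set.range x) = ⊤) (n : ℕ) (S : Set G) (g : G)
    (hS : Good n S) (hg : ∀ i, ⁅x i, g⁆ ∈ Subgroup.closure S) : Good (n + 1) (insert g S) := by
  obtain ⟨N, hN, hf, hc, hSN⟩ := hS
  have hall : ∀ y : G, y * g * y⁻¹ * g⁻¹ ∈ N := by
    intro y
    have hy : y ∈ Subgroup.closure (Set.range x) := hx ▸ Subgroup.mem_top y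
    induction hy using Subgroup.closure_induction with
    | mem u hu =>
      obtain ⟨i, rfl⟩ := hu
      exact (Subgroup.closure_le N).2 hSN (hg i)
    | one => simp
    | mul a b _ _ ha hb =>
      have e : a * b * g * (a * b)⁻¹ * g⁻¹
        = (a * (b * g * b⁻¹ * g⁻¹) * a⁻¹) * (a * g * a⁻¹ * g⁻¹) := by group
      rw [e]
      exact mul_mem (hN.conj_mem _ hb _) ha
    | inv a _ ha =>
      have e : a⁻¹ * g * a⁻¹⁻¹ * g⁻¹ = a⁻¹ * (a * g * a⁻¹ * g⁻¹)⁻¹ * a⁻¹⁻¹ := by group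
      rw [e]
      exact hN.conj_mem _ (inv_mem ha) _
  have hcoe : ((Subgroup.zpowers g ⊔ N : Subgroup G) : Set G)
      = (Subgroup.zpowers g : Set G) * (N : Set G) := Subgroup.mul_normal _ _
  have hgf : IsOfFinOrder g := isOfFinOrder_iff_pow_eq_one.2 ⟨3, by norm_num, h g⟩
  have hzf : Finite (Subgroup.zpowers g) := hgf.finite_zpowers
  have hzc : Nat.card (Subgroup.zpowers g) ≤ 3 := by
    rw [Nat.card_zpowers]
    exact orderOf_le_of_pow_eq_one (by norm_num) (h g)
  refine ⟨Subgroup.zpowers g ⊔ N, ⟨?_⟩, ?_, ?_, ?_⟩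
  · intro a ha y
    have gm : g ∈ Subgroup.zpowers g ⊔ N :=
      (le_sup_left : _ ≤ Subgroup.zpowers g ⊔ N) (Subgroup.mem_zpowers g)
    have nm : ∀ u ∈ N, u ∈ Subgroup.zpowers g ⊔ N := fun u hu =>
      (le_sup_right : _ ≤ Subgroup.zpowers g ⊔ N) hu
    have : Subgroup.zpowers g ⊔ N ≤ (Subgroup.zpowers g ⊔ N).comap (MulAut.conj y).toMonoidHom := by
      refine sup_le ?_ ?_
      · rw [Subgroup.zpowers_le]
        have : y * g * y⁻¹ = (y * g * y⁻¹ * g⁻¹) * g := by group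
        change y * g * y⁻¹ ∈ Subgroup.zpowers g ⊔ N
        rw [this]
        exact mul_mem (nm _ (hall y)) gm
      · intro u hu
        exact nm _ (hN.conj_mem _ hu y)
    exact this ha
  · have : ((Subgroup.zpowers g ⊔ N : Subgroup G) : Set G).Finite := by
      rw [hcoe]
      exact Set.Finite.mul (Set.toFinite _) (Set.toFinite _)
    exact this
  · change Nat.card ((Subgroup.zpowers g ⊔ N : Subgroup G) : Set G) ≤ _
    rw [hcoe]
    refine (Set.natCard_mul_le).trans ?_
    rw [pow_succ, mul_comm]
    exact Nat.mul_le_mul hc hzc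
  · rw [Set.insert_subset_iff]
    exact ⟨(le_sup_left : _ ≤ Subgroup.zpowers g ⊔ N) (Subgroup.mem_zpowers g),
      hSN.trans (le_sup_right : _ ≤ Subgroup.zpowers g ⊔ N)⟩

theorem upper (h : ∀ x : G, x ^ 3 = 1) (x : Fin 4 → G)
    (hx : Subgroup.closure (Set.range x) = ⊤) : Finite G ∧ Nat.card G ≤ 3 ^ 14 := by
  have st := good_step h x hx
  have t1 := st _ _ ⁅x 2, ⁅x 0, x 1⁆⁆ good_zero (fun i => by rw [central h]; exact one_mem _)
  have t2 := st _ _ ⁅x 3, ⁅x 0, x 1⁆⁆ t1 (fun i => by rw [central h]; exact one_mem _)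
  have t3 := st _ _ ⁅x 3, ⁅x 0, x 2⁆⁆ t2 (fun i => by rw [central h]; exact one_mem _)
  have t4 := st _ _ ⁅x 3, ⁅x 1, x 2⁆⁆ t3 (fun i => by rw [central h]; exact one_mem _)
  have tl : ∀ a b : G, ⁅a, ⁅a, b⁆⁆ = 1 := fun a b =>
    commutatorElement_eq_one_iff_commute.2 (comm_left h a b)
  have tr : ∀ a b : G, ⁅b, ⁅a, b⁆⁆ = 1 := fun a b =>
    commutatorElement_eq_one_iff_commute.2 (comm_right h a b)
  -- membership helpers
  have m0 : ∀ (S : Set G) (c a b : G), ⁅c, ⁅a, b⁆⁆ ∈ S → ⁅c, ⁅a, b⁆⁆ ∈ Subgroup.closure S :=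
    fun S c a b hh => Subgroup.subset_closure hh
  have m1 : ∀ (S : Set G) (c a b : G), ⁅c, ⁅a, b⁆⁆ ∈ S → ⁅b, ⁅a, c⁆⁆ ∈ Subgroup.closure S :=
    fun S c a b hh => by
      rw [swap_outer h]; exact inv_mem (Subgroup.subset_closure hh)
  have m2 : ∀ (S : Set G) (c a b : G), ⁅c, ⁅a, b⁆⁆ ∈ S → ⁅a, ⁅b, c⁆⁆ ∈ Subgroup.closure S :=
    fun S c a b hh => by
      rw [swap_outer h, swap_inner h, inv_inv]; exact Subgroup.subset_closure hh
  have c1 := st _ _ ⁅x 0, x 1⁆ t4 (fun i => by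
    fin_cases i
    · simp [tl]
    · simp [tr]
    · apply m0; simp
    · apply m0; simp)
  have c2 := st _ _ ⁅x 0, x 2⁆ c1 (fun i => by
    fin_cases i
    · simp [tl]
    · apply m1; simp
    · simp [tr]
    · apply m0; simp)
  have c3 := st _ _ ⁅x 1, x 2⁆ c2 (fun i => by
    fin_cases i
    · apply m2; simp
    · simp [tl]
    · simp [tr]
    · apply m0; simp)
  have c4 := st _ _ ⁅x 0, x 3⁆ c3 (fun i => by
    fin_cases i
    · simp [tl]
    · apply m1; simp
    · apply m1; simp
    · simp [tr])
  have c5 := st _ _ ⁅x 1, x 3⁆ c4 (fun i => by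
    fin_cases i
    · apply m2; simp
    · simp [tl]
    · apply m1; simp
    · simp [tr])
  have c6 := st _ _ ⁅x 2, x 3⁆ c5 (fun i => by
    fin_cases i
    · apply m2; simp
    · apply m2; simp
    · simp [tl]
    · simp [tr])
  have n0 : ∀ (S : Set G) (a b : G), ⁅a, b⁆ ∈ S → ⁅a, b⁆ ∈ Subgroup.closure S :=
    fun S a b hh => Subgroup.subset_closure hh
  have n1 : ∀ (S : Set G) (a b : G), ⁅a, b⁆ ∈ S → ⁅b, a⁆ ∈ Subgroup.closure S :=
    fun S a b hh => by
      rw [← commutatorElement_inv]; exact inv_mem (Subgroup.subset_closure hh)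
  have x0 := st _ _ (x 0) c6 (fun i => by
    fin_cases i
    · simp
    all_goals (apply n1; simp))
  have x1 := st _ _ (x 1) x0 (fun i => by
    fin_cases i
    · apply n0; simp
    · simp
    all_goals (apply n1; simp))
  have x2 := st _ _ (x 2) x1 (fun i => by
    fin_cases i
    · apply n0; simp
    · apply n0; simp
    · simp
    all_goals (apply n1; simp))
  have x3 := st _ _ (x 3) x2 (fun i => by
    fin_cases i
    · apply n0; simp
    · apply n0; simp
    · apply n0; simp
    · simp)
  obtain ⟨N, -, hf, hc, hS⟩ := x3
  have hN : N = ⊤ := by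
    rw [eq_top_iff, ← hx, Subgroup.closure_le]
    rintro _ ⟨i, rfl⟩
    apply hS
    fin_cases i <;> simp
  subst hN
  rw [Subgroup.card_top] at hc
  exact ⟨Finite.of_equiv _ Subgroup.topEquiv.toEquiv, hc⟩

end Engel

/-- The explicit model. -/
@[ext] structure M where
  v0 : ZMod 3
  v1 : ZMod 3
  v2 : ZMod 3
  v3 : ZMod 3
  c01 : ZMod 3
  c02 : ZMod 3
  c03 : ZMod 3
  c12 : ZMod 3
  c13 : ZMod 3
  c23 : ZMod 3
  t012 : ZMod 3
  t013 : ZMod 3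
  t023 : ZMod 3
  t123 : ZMod 3

namespace M

/-- cubic part of the multiplication for one triple of generators -/
def gam (_v1 v2 v3 c12 c13 c23 w1 w2 w3 : ZMod 3) : ZMod 3 :=
  v3 * w1 * w2 - v2 * w1 * (v3 + w3) + (c12 * w3 - c13 * w2 + c23 * w1)

/-- multiplication -/
def mul (a b : M) : M where
  v0 := a.v0 + b.v0
  v1 := a.v1 + b.v1
  v2 := a.v2 + b.v2
  v3 := a.v3 + b.v3
  c01 := a.c01 + b.c01 - a.v1 * b.v0
  c02 := a.c02 + b.c02 - a.v2 * b.v0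
  c03 := a.c03 + b.c03 - a.v3 * b.v0
  c12 := a.c12 + b.c12 - a.v2 * b.v1
  c13 := a.c13 + b.c13 - a.v3 * b.v1
  c23 := a.c23 + b.c23 - a.v3 * b.v2
  t012 := a.t012 + b.t012 + gam a.v0 a.v1 a.v2 a.c01 a.c02 a.c12 b.v0 b.v1 b.v2
  t013 := a.t013 + b.t013 + gam a.v0 a.v1 a.v3 a.c01 a.c03 a.c13 b.v0 b.v1 b.v3
  t023 := a.t023 + b.t023 + gam a.v0 a.v2 a.v3 a.c02 a.c03 a.c23 b.v0 b.v2 b.v3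
  t123 := a.t123 + b.t123 + gam a.v1 a.v2 a.v3 a.c12 a.c13 a.c23 b.v1 b.v2 b.v3

instance : Mul M := ⟨mul⟩
instance : One M := ⟨⟨0,0,0,0,0,0,0,0,0,0,0,0,0,0⟩⟩
instance : Inv M := ⟨fun a => mul a a⟩

theorem mul_def (a b : M) : a * b = mul a b := rfl
theorem one_def : (1 : M) = ⟨0,0,0,0,0,0,0,0,0,0,0,0,0,0⟩ := rfl
theorem inv_def (a : M) : a⁻¹ = mul a a := rfl

theorem three : (3 : ZMod 3) = 0 := rfl

theorem mul_assoc' (a b c : M) : a * b * c = a * (b * c) := by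
  simp only [mul_def, mul, gam]
  ext <;> dsimp only <;> grind

theorem one_mul' (a : M) : 1 * a = a := by
  simp only [mul_def, one_def, mul, gam]
  ext <;> dsimp only <;> ring

theorem mul_one' (a : M) : a * 1 = a := by
  simp only [mul_def, one_def, mul, gam]
  ext <;> dsimp only <;> ring

theorem cube' (a : M) : a⁻¹ * a = 1 := by
  simp only [mul_def, inv_def, one_def, mul, gam]
  ext <;> dsimp only <;> grind

instance : Group M :=
  Group.ofLeftAxioms mul_assoc' one_mul' cube'

theorem cube (a : M) : a ^ 3 = 1 := by
  rw [pow_succ, pow_two]; exact cube' a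

/-- equivalence with a product -/
def eqv : M ≃ (Fin 14 → ZMod 3) where
  toFun a := ![a.v0, a.v1, a.v2, a.v3, a.c01, a.c02, a.c03, a.c12, a.c13, a.c23,
    a.t012, a.t013, a.t023, a.t123]
  invFun f := ⟨f 0, f 1, f 2, f 3, f 4, f 5, f 6, f 7, f 8, f 9, f 10, f 11, f 12, f 13⟩
  left_inv a := rfl
  right_inv f := by
    funext i; fin_cases i <;> rfl

theorem card : Nat.card M = 3 ^ 14 := by
  rw [Nat.card_congr eqv]; simp

/-- the generators -/
def X : Fin 4 → M := ![⟨1, 0, 0, 0, 0, 0, 0, 0, 0, 0, 0, 0, 0, 0⟩,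
  ⟨0, 1, 0, 0, 0, 0, 0, 0, 0, 0, 0, 0, 0, 0⟩,
  ⟨0, 0, 1, 0, 0, 0, 0, 0, 0, 0, 0, 0, 0, 0⟩,
  ⟨0, 0, 0, 1, 0, 0, 0, 0, 0, 0, 0, 0, 0, 0⟩]

theorem pow_val (f : ZMod 3 → M) (H : Subgroup M) (h0 : f 0 = 1) (h2 : f 2 = f 1 * f 1)
    (h1 : f 1 ∈ H) (s : ZMod 3) : f s ∈ H := by
  fin_cases s
  · exact (congrArg (· ∈ H) h0).mpr (one_mem H)
  · exact h1
  · exact (congrArg (· ∈ H) h2).mpr (mul_mem h1 h1)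

theorem comm_mem (H : Subgroup M) {a b c : M} (ha : a ∈ H) (hb : b ∈ H)
    (hc : c = a⁻¹ * b⁻¹ * a * b) : c ∈ H := by
  rw [hc]
  exact mul_mem (mul_mem (mul_mem (inv_mem ha) (inv_mem hb)) ha) hb

theorem gen : Subgroup.closure (Set.range X) = ⊤ := by
  rw [eq_top_iff]
  intro a _
  generalize hH : Subgroup.closure (Set.range X) = H
  have hX : ∀ i, X i ∈ H := fun i => hH ▸ Subgroup.subset_closure ⟨i, rfl⟩
  have v0 : ((⟨1, 0, 0, 0, 0, 0, 0, 0, 0, 0, 0, 0, 0, 0⟩ : M)) ∈ H := hX 0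
  have v1 : ((⟨0, 1, 0, 0, 0, 0, 0, 0, 0, 0, 0, 0, 0, 0⟩ : M)) ∈ H := hX 1
  have v2 : ((⟨0, 0, 1, 0, 0, 0, 0, 0, 0, 0, 0, 0, 0, 0⟩ : M)) ∈ H := hX 2
  have v3 : ((⟨0, 0, 0, 1, 0, 0, 0, 0, 0, 0, 0, 0, 0, 0⟩ : M)) ∈ H := hX 3
  have c01 : ((⟨0, 0, 0, 0, 1, 0, 0, 0, 0, 0, 0, 0, 0, 0⟩ : M)) ∈ H := comm_mem H v0 v1 rfl
  have c02 : ((⟨0, 0, 0, 0, 0, 1, 0, 0, 0, 0, 0, 0, 0, 0⟩ : M)) ∈ H := comm_mem H v0 v2 rfl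
  have c03 : ((⟨0, 0, 0, 0, 0, 0, 1, 0, 0, 0, 0, 0, 0, 0⟩ : M)) ∈ H := comm_mem H v0 v3 rfl
  have c12 : ((⟨0, 0, 0, 0, 0, 0, 0, 1, 0, 0, 0, 0, 0, 0⟩ : M)) ∈ H := comm_mem H v1 v2 rfl
  have c13 : ((⟨0, 0, 0, 0, 0, 0, 0, 0, 1, 0, 0, 0, 0, 0⟩ : M)) ∈ H := comm_mem H v1 v3 rfl
  have c23 : ((⟨0, 0, 0, 0, 0, 0, 0, 0, 0, 1, 0, 0, 0, 0⟩ : M)) ∈ H := comm_mem H v2 v3 rfl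
  have t012 : ((⟨0, 0, 0, 0, 0, 0, 0, 0, 0, 0, 1, 0, 0, 0⟩ : M)) ∈ H := comm_mem H c01 v2 rfl
  have t013 : ((⟨0, 0, 0, 0, 0, 0, 0, 0, 0, 0, 0, 1, 0, 0⟩ : M)) ∈ H := comm_mem H c01 v3 rfl
  have t023 : ((⟨0, 0, 0, 0, 0, 0, 0, 0, 0, 0, 0, 0, 1, 0⟩ : M)) ∈ H := comm_mem H c02 v3 rfl
  have t123 : ((⟨0, 0, 0, 0, 0, 0, 0, 0, 0, 0, 0, 0, 0, 1⟩ : M)) ∈ H := comm_mem H c12 v3 rfl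
  have pv0 := pow_val (fun s => ⟨s, 0, 0, 0, 0, 0, 0, 0, 0, 0, 0, 0, 0, 0⟩) H rfl rfl v0
  have pv1 := pow_val (fun s => ⟨0, s, 0, 0, 0, 0, 0, 0, 0, 0, 0, 0, 0, 0⟩) H rfl rfl v1
  have pv2 := pow_val (fun s => ⟨0, 0, s, 0, 0, 0, 0, 0, 0, 0, 0, 0, 0, 0⟩) H rfl rfl v2
  have pv3 := pow_val (fun s => ⟨0, 0, 0, s, 0, 0, 0, 0, 0, 0, 0, 0, 0, 0⟩) H rfl rfl v3
  have pc01 := pow_val (fun s => ⟨0, 0, 0, 0, s, 0, 0, 0, 0, 0, 0, 0, 0, 0⟩) H rfl rfl c01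
  have pc02 := pow_val (fun s => ⟨0, 0, 0, 0, 0, s, 0, 0, 0, 0, 0, 0, 0, 0⟩) H rfl rfl c02
  have pc03 := pow_val (fun s => ⟨0, 0, 0, 0, 0, 0, s, 0, 0, 0, 0, 0, 0, 0⟩) H rfl rfl c03
  have pc12 := pow_val (fun s => ⟨0, 0, 0, 0, 0, 0, 0, s, 0, 0, 0, 0, 0, 0⟩) H rfl rfl c12
  have pc13 := pow_val (fun s => ⟨0, 0, 0, 0, 0, 0, 0, 0, s, 0, 0, 0, 0, 0⟩) H rfl rfl c13
  have pc23 := pow_val (fun s => ⟨0, 0, 0, 0, 0, 0, 0, 0, 0, s, 0, 0, 0, 0⟩) H rfl rfl c23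
  have pt012 := pow_val (fun s => ⟨0, 0, 0, 0, 0, 0, 0, 0, 0, 0, s, 0, 0, 0⟩) H rfl rfl t012
  have pt013 := pow_val (fun s => ⟨0, 0, 0, 0, 0, 0, 0, 0, 0, 0, 0, s, 0, 0⟩) H rfl rfl t013
  have pt023 := pow_val (fun s => ⟨0, 0, 0, 0, 0, 0, 0, 0, 0, 0, 0, 0, s, 0⟩) H rfl rfl t023
  have pt123 := pow_val (fun s => ⟨0, 0, 0, 0, 0, 0, 0, 0, 0, 0, 0, 0, 0, s⟩) H rfl rfl t123
  have e : a = (⟨a.v0, 0, 0, 0, 0, 0, 0, 0, 0, 0, 0, 0, 0, 0⟩ : M) *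
    (⟨0, a.v1, 0, 0, 0, 0, 0, 0, 0, 0, 0, 0, 0, 0⟩ : M) *
    (⟨0, 0, a.v2, 0, 0, 0, 0, 0, 0, 0, 0, 0, 0, 0⟩ : M) *
    (⟨0, 0, 0, a.v3, 0, 0, 0, 0, 0, 0, 0, 0, 0, 0⟩ : M) *
    (⟨0, 0, 0, 0, a.c01, 0, 0, 0, 0, 0, 0, 0, 0, 0⟩ : M) *
    (⟨0, 0, 0, 0, 0, a.c02, 0, 0, 0, 0, 0, 0, 0, 0⟩ : M) *
    (⟨0, 0, 0, 0, 0, 0, a.c03, 0, 0, 0, 0, 0, 0, 0⟩ : M) *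
    (⟨0, 0, 0, 0, 0, 0, 0, a.c12, 0, 0, 0, 0, 0, 0⟩ : M) *
    (⟨0, 0, 0, 0, 0, 0, 0, 0, a.c13, 0, 0, 0, 0, 0⟩ : M) *
    (⟨0, 0, 0, 0, 0, 0, 0, 0, 0, a.c23, 0, 0, 0, 0⟩ : M) *
    (⟨0, 0, 0, 0, 0, 0, 0, 0, 0, 0, a.t012, 0, 0, 0⟩ : M) *
    (⟨0, 0, 0, 0, 0, 0, 0, 0, 0, 0, 0, a.t013, 0, 0⟩ : M) *
    (⟨0, 0, 0, 0, 0, 0, 0, 0, 0, 0, 0, 0, a.t023, 0⟩ : M) *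
    (⟨0, 0, 0, 0, 0, 0, 0, 0, 0, 0, 0, 0, 0, a.t123⟩ : M) := by
    simp only [mul_def, mul, gam]
    ext <;> dsimp only <;> ring
  rw [e]
  exact (mul_mem (mul_mem (mul_mem (mul_mem (mul_mem (mul_mem (mul_mem (mul_mem (mul_mem (mul_mem (mul_mem (mul_mem (mul_mem (pv0 _) (pv1 _)) (pv2 _)) (pv3 _)) (pc01 _)) (pc02 _)) (pc03 _)) (pc12 _)) (pc13 _)) (pc23 _)) (pt012 _)) (pt013 _)) (pt023 _)) (pt123 _))

end M
end B43aux

/-- `B(4,3)` is a finite group of cardinality exactly `3¹⁴`. -/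
theorem card_B43 : Finite B43 ∧ Nat.card B43 = 3 ^ 14 := by
  have h3 : ∀ x : B43, x ^ 3 = 1 := by
    intro x
    obtain ⟨w, rfl⟩ := QuotientGroup.mk_surjective x
    rw [← QuotientGroup.mk_pow, QuotientGroup.eq_one_iff]
    exact Subgroup.subset_normalClosure ⟨w, rfl⟩
  have hgen : Subgroup.closure (Set.range fun i : Fin 4 => ((FreeGroup.of i : FreeGroup (Fin 4)) : B43))
      = ⊤ := by
    have := congrArg (Subgroup.map (QuotientGroup.mk' (Subgroup.normalClosure
      {w : FreeGroup (Fin 4) | ∃ v, w = v ^ 3}))) (FreeGroup.closure_range_of (Fin 4))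
    rw [MonoidHom.map_closure, Subgroup.map_top_of_surjective _ (QuotientGroup.mk'_surjective _),
      ← Set.range_comp] at this
    exact this
  obtain ⟨hf, hc⟩ := B43aux.upper h3 _ hgen
  refine ⟨hf, le_antisymm hc ?_⟩
  have hker : Subgroup.normalClosure {w : FreeGroup (Fin 4) | ∃ v, w = v ^ 3}
      ≤ (FreeGroup.lift B43aux.M.X).ker := by
    apply Subgroup.normalClosure_le_normal
    rintro _ ⟨v, rfl⟩
    simp [MonoidHom.mem_ker, B43aux.M.cube]
  have hs : Function.Surjective (QuotientGroup.lift _ (FreeGroup.lift B43aux.M.X) hker) := by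
    apply QuotientGroup.lift_surjective_of_surjective
    rw [← MonoidHom.range_eq_top, FreeGroup.range_lift_eq_closure, B43aux.M.gen]
  rw [← B43aux.M.card]
  exact Nat.card_le_card_of_surjective _ hs
end

section
/- For every natural number n ≥ 1, the free Burnside group B(n,3) of exponent 3 on n generators is finite, of cardinality exactly 3^(n + C(n,2) + C(n,3)), where C(n,k) denotes the binomial coefficient. -/
/-- The free Burnside group `B(n,3)` of exponent 3 on `n` generators:
the free group on `n` generators modulo the normal closure of all cubes. -/
abbrev Burnside3 (n : ℕ) : Type :=
  FreeGroup (Fin n) ⧸ Subgroup.normalClosure {w : FreeGroup (Fin n) | ∃ v, w = v ^ 3}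


namespace B3

theorem pow3 {n : ℕ} (g : Burnside3 n) : g ^ 3 = 1 := by
  induction g using QuotientGroup.induction_on with
  | H z =>
    rw [← QuotientGroup.mk_pow, QuotientGroup.eq_one_iff]
    exact Subgroup.subset_normalClosure ⟨z, rfl⟩

def gen {n : ℕ} (i : Fin n) : Burnside3 n := QuotientGroup.mk (FreeGroup.of i)

theorem closure_gen (n : ℕ) : Subgroup.closure (Set.range (gen (n := n))) = ⊤ := by
  have h := FreeGroup.closure_range_of (Fin n)
  have h2 := congrArg (Subgroup.map (QuotientGroup.mk'
    (Subgroup.normalClosure {w : FreeGroup (Fin n) | ∃ v, w = v ^ 3}))) h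
  rw [MonoidHom.map_closure, ← Set.range_comp, Subgroup.map_top_of_surjective _
    (QuotientGroup.mk'_surjective _)] at h2
  exact h2

theorem gen_induct {n : ℕ} (S : Subgroup (Burnside3 n)) (h : ∀ i, gen i ∈ S) (g) : g ∈ S := by
  have : Subgroup.closure (Set.range (gen (n := n))) ≤ S := by
    rw [Subgroup.closure_le]; rintro _ ⟨i, rfl⟩; exact h i
  rw [closure_gen] at this
  exact this trivial

def lift {n : ℕ} {H : Type*} [Group H] (f : FreeGroup (Fin n) →* H) (hf : ∀ v, f v ^ 3 = 1) :
    Burnside3 n →* H :=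
  QuotientGroup.lift _ f (by
    have : Subgroup.normalClosure {w : FreeGroup (Fin n) | ∃ v, w = v ^ 3} ≤ f.ker := by
      apply Subgroup.normalClosure_le_normal
      rintro _ ⟨v, rfl⟩
      simp [MonoidHom.mem_ker, hf]
    exact fun x hx => this hx)

theorem lift_gen {n : ℕ} {H : Type*} [Group H] (f : FreeGroup (Fin n) →* H)
    (hf : ∀ v, f v ^ 3 = 1) (i : Fin n) : lift f hf (gen i) = f (FreeGroup.of i) := rfl

abbrev T (n : ℕ) : Type := Σ j : Fin n, {i : Fin n // i < j}

theorem card_T (n : ℕ) : Fintype.card (T n) = n.choose 2 := by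
  rw [Fintype.card_sigma]
  have : ∀ j : Fin n, Fintype.card {i : Fin n // i < j} = j := by
    intro j
    rw [Fintype.card_subtype]
    have : (Finset.univ.filter (fun i : Fin n => i < j)) = Finset.Iio j := by ext; simp
    rw [this, Fin.card_Iio]
  simp only [this]
  rw [Fin.sum_univ_eq_sum_range (fun i => i) n, Finset.sum_range_id, Nat.choose_two_right]

section ring
variable {G E : Type*} [Group G] [Ring E] (h3 : (3 : E) = 0) (ρ : G →* E)
  (hρ : ∀ g, (ρ g - 1) * (ρ g - 1) = 0)
include h3 hρ

theorem anti (g h : G) : (ρ g - 1) * (ρ h - 1) = - ((ρ h - 1) * (ρ g - 1)) := by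
  have key : ∀ g h : G, (ρ g - 1) * (ρ h - 1) * (ρ g - 1) = 0 := by
    intro g h
    have hu := hρ g
    have hv := hρ h
    have huv := hρ (g * h)
    have hg : ρ g = 1 + (ρ g - 1) := by abel
    have hh : ρ h = 1 + (ρ h - 1) := by abel
    have hinv : ρ h * ρ h⁻¹ = 1 := by rw [← map_mul]; simp
    rw [map_mul] at huv
    generalize ρ g - 1 = u at *
    generalize ρ h - 1 = v at *
    rw [hg, hh] at huv
    have e1 : u * v + v * u + v * u * v + u * v * u + u * v * u * v = 0 := by
      have : ((1 + u) * (1 + v) - 1) * ((1 + u) * (1 + v) - 1) = u * u + v * v + u * u * v + u * (v * v)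
        + (u * v + v * u + v * u * v + u * v * u + u * v * u * v) := by noncomm_ring
      rw [this, hu, hv] at huv
      simpa using huv
    have e2 : u * v * u * (1 + v) = 0 := by
      have : u * (u * v + v * u + v * u * v + u * v * u + u * v * u * v) =
        u * u * v + u * u * v * u + u * u * v * u * v + u * v * u * (1 + v) := by noncomm_ring
      rw [e1, hu] at this
      simpa using this.symm
    rw [← hh] at e2
    calc u * v * u = u * v * u * (ρ h * ρ h⁻¹) := by rw [hinv, mul_one]
      _ = 0 := by rw [← mul_assoc, e2, zero_mul]
  have k1 := key g h
  have k2 := key h g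
  have hu := hρ g
  have hv := hρ h
  have huv := hρ (g * h)
  have hg : ρ g = 1 + (ρ g - 1) := by abel
  have hh : ρ h = 1 + (ρ h - 1) := by abel
  rw [map_mul] at huv
  generalize ρ g - 1 = u at *
  generalize ρ h - 1 = v at *
  rw [hg, hh] at huv
  have : ((1 + u) * (1 + v) - 1) * ((1 + u) * (1 + v) - 1) = u * u + v * v + u * u * v + u * (v * v)
        + (u * v + v * u + v * u * v + u * v * u + u * v * u * v) := by noncomm_ring
  rw [this, hu, hv, k1, k2] at huv
  apply eq_neg_of_add_eq_zero_left
  simpa using huv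

theorem triple (g h k : G) : (ρ g - 1) * (ρ h - 1) * (ρ k - 1) = 0 := by
  have a1 := anti h3 ρ hρ g k
  have a2 := anti h3 ρ hρ h k
  have a3 := anti h3 ρ hρ (g * h) k
  have hg : ρ g = 1 + (ρ g - 1) := by abel
  have hh : ρ h = 1 + (ρ h - 1) := by abel
  rw [map_mul] at a3
  generalize ρ g - 1 = u at *
  generalize ρ h - 1 = v at *
  generalize ρ k - 1 = w at *
  rw [hg, hh] at a3
  have e1 : u * v * w = - (w * u * v) := by
    have l : ((1 + u) * (1 + v) - 1) * w = u * w + v * w + u * v * w := by noncomm_ring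
    have r : w * ((1 + u) * (1 + v) - 1) = w * u + w * v + w * u * v := by noncomm_ring
    rw [l, r, a1, a2] at a3
    have := congrArg (fun z => z + (w * u + w * v)) a3
    calc u * v * w = -(w * u) + -(w * v) + u * v * w + (w * u + w * v) := by abel
      _ = _ := this
      _ = _ := by abel
  have e2 : w * u * v = u * v * w := by
    calc w * u * v = -(-(w * u)) * v := by rw [neg_neg]
      _ = - (u * (w * v)) := by rw [← a1]; noncomm_ring
      _ = - (u * (- (v * w))) := by rw [a2, neg_neg]
      _ = _ := by noncomm_ring
  rw [e2] at e1
  have : (3 : E) * (u * v * w) = u * v * w := by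
    calc (3 : E) * (u * v * w) = u * v * w + u * v * w + u * v * w := by noncomm_ring
      _ = u * v * w + u * v * w + -(u * v * w) := by rw [← e1]
      _ = _ := by abel
  rw [h3, zero_mul] at this
  exact this.symm
end ring

/-! Lower bound -/

abbrev L (n : ℕ) : Type := ZMod 3 × (Fin n → ZMod 3) × (T n → ZMod 3)

def bet {n : ℕ} (v v' : Fin n → ZMod 3) : T n → ZMod 3 :=
  fun t => v t.1 * v' t.2.1 - v t.2.1 * v' t.1

def N {n : ℕ} (v : Fin n → ZMod 3) (w : T n → ZMod 3) : Module.End (ZMod 3) (L n) where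
  toFun l := (0, l.1 • v, bet v l.2.1 + l.1 • w)
  map_add' a b := by
    ext t
    · simp
    · simp [add_mul]
    · simp [bet]; ring
  map_smul' c a := by
    ext t
    · simp
    · simp [mul_assoc]
    · simp [bet]; ring

theorem N_mul {n : ℕ} (v v' : Fin n → ZMod 3) (w w' : T n → ZMod 3) :
    (1 + N v w) * (1 + N v' w') = 1 + N (v + v') (w + w' + bet v v') := by
  refine LinearMap.ext fun l => ?_
  ext t
  · simp [N]
  · simp [N]; ring
  · simp [N, bet]; ring

theorem N_zero {n : ℕ} : N (0 : Fin n → ZMod 3) 0 = 0 := by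
  refine LinearMap.ext fun l => ?_
  ext t <;> simp [N, bet]

theorem bet_self {n : ℕ} (v : Fin n → ZMod 3) : bet v v = 0 := by
  ext t; simp [bet]; ring

theorem bet_neg {n : ℕ} (v : Fin n → ZMod 3) : bet v (-v) = 0 := by
  ext t; simp [bet]; ring

theorem bet_neg' {n : ℕ} (v : Fin n → ZMod 3) : bet (-v) v = 0 := by
  ext t; simp [bet]; ring

theorem N_sq {n : ℕ} (v : Fin n → ZMod 3) (w : T n → ZMod 3) : N v w * N v w = 0 := by
  refine LinearMap.ext fun l => ?_
  ext t
  · simp [N]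
  · simp [N]
  · simp [N, bet]; ring

def tU {n : ℕ} (v : Fin n → ZMod 3) (w : T n → ZMod 3) : (Module.End (ZMod 3) (L n))ˣ where
  val := 1 + N v w
  inv := 1 + N (-v) (-w)
  val_inv := by rw [N_mul, bet_neg]; simp [N_zero]
  inv_val := by rw [N_mul, bet_neg']; simp [N_zero]

def US (n : ℕ) : Subgroup (Module.End (ZMod 3) (L n))ˣ where
  carrier := {u | ∃ v w, u = tU v w}
  mul_mem' := by
    rintro _ _ ⟨v, w, rfl⟩ ⟨v', w', rfl⟩
    exact ⟨_, _, Units.ext (N_mul _ _ _ _)⟩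
  one_mem' := ⟨0, 0, Units.ext (by simp [tU, N_zero])⟩
  inv_mem' := by
    rintro _ ⟨v, w, rfl⟩
    exact ⟨-v, -w, Units.ext (by simp [tU])⟩

def fr (n : ℕ) : FreeGroup (Fin n) →* (Module.End (ZMod 3) (L n))ˣ :=
  FreeGroup.lift (fun i => tU (Pi.single i 1) 0)

theorem fr_mem {n : ℕ} (g : FreeGroup (Fin n)) : ∃ v w, fr n g = tU v w := by
  change fr n g ∈ US n
  have : (fr n).range ≤ US n := by
    unfold fr
    rw [FreeGroup.range_lift_eq_closure, Subgroup.closure_le]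
    rintro _ ⟨i, rfl⟩
    exact ⟨_, _, rfl⟩
  exact this ⟨g, rfl⟩

theorem end3 {A : Type*} [AddCommGroup A] [Module (ZMod 3) A] :
    (3 : Module.End (ZMod 3) A) = 0 := by
  have h : (3 : ZMod 3) = 0 := by decide
  ext a
  calc (3 : Module.End (ZMod 3) A) a = (3 : ℕ) • a := rfl
    _ = ((3 : ℕ) : ZMod 3) • a := by rw [Nat.cast_smul_eq_nsmul]
    _ = 0 := by rw [Nat.cast_ofNat, h, zero_smul]

theorem cube_of_sq {E : Type*} [Ring E] (h3 : (3 : E) = 0) (u : E) (h : u * u = 0) :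
    (1 + u) ^ 3 = 1 := by
  have : (1 + u) ^ 3 = 1 + 3 * u + 3 * (u * u) + u * u * u := by noncomm_ring
  rw [this, h3, h]; simp

theorem fr_cube {n : ℕ} (g : FreeGroup (Fin n)) : fr n g ^ 3 = 1 := by
  obtain ⟨v, w, h⟩ := fr_mem g
  rw [h]
  apply Units.ext
  rw [Units.val_pow_eq_pow_val]
  exact cube_of_sq end3 _ (N_sq v w)

def rho (n : ℕ) : Burnside3 n →* Module.End (ZMod 3) (L n) :=
  (Units.coeHom _).comp (lift (fr n) fr_cube)

theorem rho_gen {n : ℕ} (i : Fin n) : rho n (gen i) = 1 + N (Pi.single i 1) 0 := by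
  simp [rho, lift_gen, fr, tU]

theorem rho_sq {n : ℕ} (g : Burnside3 n) : (rho n g - 1) * (rho n g - 1) = 0 := by
  induction g using QuotientGroup.induction_on with
  | H z =>
    obtain ⟨v, w, h⟩ := fr_mem z
    have : rho n (QuotientGroup.mk z) = 1 + N v w := by
      change ((fr n z : (Module.End (ZMod 3) (L n))ˣ) : Module.End (ZMod 3) (L n)) = _
      rw [h]; rfl
    rw [this, add_sub_cancel_left, N_sq]

theorem sum_of_sq {E : Type*} [Ring E] (h3 : (3 : E) = 0) (g : E) (h : (g - 1) * (g - 1) = 0) :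
    1 + g + g * g = 0 := by
  have : 1 + g + g * g = (g - 1) * (g - 1) + 3 * g := by noncomm_ring
  rw [this, h, h3]; simp

@[ext] structure SD (n : ℕ) : Type where
  g : Burnside3 n
  a : L n

instance (n : ℕ) : Mul (SD n) := ⟨fun x y => ⟨x.g * y.g, x.a + rho n x.g y.a⟩⟩
instance (n : ℕ) : One (SD n) := ⟨⟨1, 0⟩⟩
instance (n : ℕ) : Inv (SD n) := ⟨fun x => ⟨x.g⁻¹, - rho n x.g⁻¹ x.a⟩⟩

theorem SD.mul_def {n : ℕ} (x y : SD n) : x * y = ⟨x.g * y.g, x.a + rho n x.g y.a⟩ := rfl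
theorem SD.one_def {n : ℕ} : (1 : SD n) = ⟨1, 0⟩ := rfl
theorem SD.inv_def {n : ℕ} (x : SD n) : x⁻¹ = ⟨x.g⁻¹, - rho n x.g⁻¹ x.a⟩ := rfl

instance (n : ℕ) : Group (SD n) := Group.ofLeftAxioms
  (fun x y z => by
    simp only [SD.mul_def, mul_assoc, map_mul, map_add, Module.End.mul_apply, add_assoc])
  (fun x => by simp [SD.mul_def, SD.one_def])
  (fun x => by simp [SD.mul_def, SD.one_def, SD.inv_def])

theorem SD.pow3 {n : ℕ} (x : SD n) : x ^ 3 = 1 := by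
  have h := sum_of_sq end3 _ (rho_sq x.g)
  have h' := LinearMap.congr_fun h x.a
  have hg := B3.pow3 x.g
  rw [pow_succ, pow_two, mul_assoc] at hg
  rw [pow_succ, pow_two, mul_assoc]
  simp only [SD.mul_def, SD.one_def, hg, map_add]
  simp only [LinearMap.add_apply, Module.End.one_apply, Module.End.mul_apply,
    LinearMap.zero_apply] at h'
  rw [← add_assoc, h']

def toSD (n : ℕ) : Burnside3 (n + 1) →* SD n :=
  lift (FreeGroup.lift (Fin.lastCases (motive := fun _ => SD n) ⟨1, (1, 0, 0)⟩
    (fun i => ⟨gen i, 0⟩))) (fun _ => SD.pow3 _)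

theorem toSD_last (n : ℕ) : toSD n (gen (Fin.last n)) = ⟨1, (1, 0, 0)⟩ := by
  simp [toSD, lift_gen]

theorem toSD_cast {n : ℕ} (i : Fin n) : toSD n (gen i.castSucc) = ⟨gen i, 0⟩ := by
  simp [toSD, lift_gen]

def inr (n : ℕ) : Burnside3 n →* SD n where
  toFun g := ⟨g, 0⟩
  map_one' := rfl
  map_mul' x y := by simp [SD.mul_def]

theorem inr_mem {n : ℕ} (g : Burnside3 n) : inr n g ∈ (toSD n).range :=
  gen_induct ((toSD n).range.comap (inr n)) (fun i => ⟨_, toSD_cast i⟩) g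

def LS (n : ℕ) : AddSubgroup (L n) where
  carrier := {l | (⟨1, l⟩ : SD n) ∈ (toSD n).range}
  add_mem' {a b} ha hb := by
    have : (⟨1, a⟩ * ⟨1, b⟩ : SD n) ∈ (toSD n).range := mul_mem ha hb
    change (⟨1, a + b⟩ : SD n) ∈ (toSD n).range
    simpa [SD.mul_def] using this
  zero_mem' := one_mem (toSD n).range
  neg_mem' {a} ha := by
    have : (⟨1, a⟩ : SD n)⁻¹ ∈ (toSD n).range := inv_mem ha
    change (⟨1, -a⟩ : SD n) ∈ (toSD n).range
    simpa [SD.inv_def] using this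

theorem LS_rho {n : ℕ} (g : Burnside3 n) {l : L n} (hl : l ∈ LS n) : rho n g l ∈ LS n := by
  have := mul_mem (mul_mem (inr_mem g) hl) (inv_mem (inr_mem g))
  have e : inr n g * ⟨1, l⟩ * (inr n g)⁻¹ = ⟨1, rho n g l⟩ := by
    simp [inr, SD.mul_def, SD.inv_def]
  rw [e] at this
  exact this

theorem LS_N {n : ℕ} (i : Fin n) {l : L n} (hl : l ∈ LS n) : N (Pi.single i 1) 0 l ∈ LS n := by
  have := sub_mem (LS_rho (gen i) hl) hl
  rw [rho_gen] at this
  simpa using this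

theorem LS_smul {n : ℕ} (c : ZMod 3) {l : L n} (hl : l ∈ LS n) : c • l ∈ LS n := by
  have : c • l = c.val • l := by
    rw [← Nat.cast_smul_eq_nsmul (ZMod 3), ZMod.natCast_zmod_val]
  rw [this]
  exact nsmul_mem hl _

theorem LS_top {n : ℕ} (l : L n) : l ∈ LS n := by
  have h1 : ((1, 0, 0) : L n) ∈ LS n := ⟨_, toSD_last n⟩
  have h2 : ∀ i : Fin n, ((0, Pi.single i 1, 0) : L n) ∈ LS n := by
    intro i
    have := LS_N i h1
    have e : N (Pi.single i 1) 0 ((1, 0, 0) : L n) = (0, Pi.single i 1, 0) := by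
      ext t <;> simp [N, bet]
    rwa [e] at this
  have h3 : ∀ t : T n, ((0, 0, Pi.single t 1) : L n) ∈ LS n := by
    rintro ⟨j, i, hij⟩
    have := LS_N j (h2 i)
    have e : N (Pi.single j 1) 0 ((0, Pi.single i 1, 0) : L n) =
        (0, 0, Pi.single ⟨j, i, hij⟩ 1) := by
      ext t
      · simp [N]
      · simp [N]
      · obtain ⟨j', i', h'⟩ := t
        simp only [N, bet, LinearMap.coe_mk, AddHom.coe_mk, Pi.single_apply, Pi.add_apply]
        by_cases a : j' = j
        · subst a
          by_cases b : i' = i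
          · subst b
            simp [hij.ne]
          · simp [b, h'.ne]
        · have : ¬ (i' = j ∧ j' = i) := by
            rintro ⟨rfl, rfl⟩
            exact absurd hij (not_lt.mpr h'.le)
          simp [a]
          tauto
    rwa [e] at this
  have e : l = l.1 • ((1, 0, 0) : L n) + ∑ i, l.2.1 i • ((0, Pi.single i 1, 0) : L n)
      + ∑ t, l.2.2 t • ((0, 0, Pi.single t 1) : L n) := by
    ext t
    · simp [Prod.fst_sum]
    · simp [Prod.fst_sum, Prod.snd_sum, Pi.single_apply]
    · simp [Prod.fst_sum, Prod.snd_sum, Pi.single_apply]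
  rw [e]
  exact add_mem (add_mem (LS_smul _ h1) (sum_mem fun i _ => LS_smul _ (h2 i)))
    (sum_mem fun t _ => LS_smul _ (h3 t))

theorem toSD_surj (n : ℕ) : Function.Surjective (toSD n) := by
  intro x
  have := mul_mem (show (⟨1, x.a⟩ : SD n) ∈ (toSD n).range from LS_top x.a) (inr_mem x.g)
  simpa [SD.mul_def, inr] using this

def sdEquiv (n : ℕ) : SD n ≃ Burnside3 n × L n where
  toFun x := (x.g, x.a)
  invFun x := ⟨x.1, x.2⟩
  left_inv _ := rfl
  right_inv _ := rfl

theorem card_SD (n : ℕ) : Nat.card (SD n) = Nat.card (Burnside3 n) * 3 ^ (1 + n + n.choose 2) := by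
  rw [Nat.card_congr (sdEquiv n), Nat.card_prod]
  congr 1
  rw [Nat.card_eq_fintype_card, Fintype.card_prod, Fintype.card_prod, Fintype.card_fun,
    Fintype.card_fun, card_T, ZMod.card, Fintype.card_fin, pow_add, pow_add, pow_one, mul_assoc]

/-! Upper bound -/

section upper

theorem conj_comm {H : Type*} [Group H] (h3 : ∀ h : H, h ^ 3 = 1) (x g : H) :
    x * (g * x * g⁻¹) = (g * x * g⁻¹) * x := by
  have hg : g * g * g = 1 := by have := h3 g; rwa [pow_succ, pow_two] at this
  have hg' : g⁻¹ = g * g := (eq_inv_of_mul_eq_one_left hg).symm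
  have e : ∀ x : H, (g * x * g⁻¹) * (g * g * x * g⁻¹ * g⁻¹) * x = 1 := by
    intro x
    have := h3 (g * x)
    rw [pow_succ, pow_two] at this
    calc _ = g * x * (g * x) * (g⁻¹ * g⁻¹ * x) := by group
      _ = g * x * (g * x) * (g * x) * (x⁻¹ * (g⁻¹ * g⁻¹ * g⁻¹) * x) := by group
      _ = x⁻¹ * (g * g * g)⁻¹ * x := by rw [this]; group
      _ = 1 := by rw [hg]; group
  have e1 := e x
  have e2 := e x⁻¹
  have c' : g * g * x⁻¹ * g⁻¹ * g⁻¹ = (g * g * x * g⁻¹ * g⁻¹)⁻¹ := by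
    simp [mul_assoc]
  have b' : g * x⁻¹ * g⁻¹ = (g * x * g⁻¹)⁻¹ := by group
  rw [c', b'] at e2
  generalize g * x * g⁻¹ = b at *
  generalize g * g * x * g⁻¹ * g⁻¹ = c at *
  -- b c x = 1, b⁻¹ c⁻¹ x⁻¹ = 1
  have hc : c = b⁻¹ * x⁻¹ := by
    calc c = b⁻¹ * (b * c * x) * x⁻¹ := by group
      _ = _ := by rw [e1]; group
  have hc2 : c = x⁻¹ * b⁻¹ := by
    calc c = (b * (b⁻¹ * c⁻¹ * x⁻¹) * x)⁻¹ := by group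
      _ = _ := by rw [e2]; group
  have := hc.symm.trans hc2
  have := congrArg (·⁻¹) this
  simpa using this

theorem gen_induct' {n : ℕ} (P : Burnside3 n → Prop) (h1 : P 1) (hm : ∀ a b, P a → P b → P (a * b))
    (h : ∀ i, P (gen i)) (g) : P g :=
  gen_induct { carrier := {g | P g}, mul_mem' := fun {a b} ha hb => hm a b ha hb, one_mem' := h1,
               inv_mem' := fun {a} ha => by
                have h3 := pow3 a
                rw [pow_succ, pow_two] at h3
                have : a⁻¹ = a * a := (eq_inv_of_mul_eq_one_left h3).symm
                rw [this]
                exact hm a a ha ha } h g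

section span
variable {n : ℕ} {A : Type} [AddCommGroup A] [Module (ZMod 3) A]
  (ρ : Burnside3 n →* Module.End (ZMod 3) A) (hρ : ∀ g, (ρ g - 1) * (ρ g - 1) = 0) (x : A)

def fam : Unit ⊕ Fin n ⊕ T n → A
  | .inl _ => x
  | .inr (.inl i) => (ρ (gen i) - 1) x
  | .inr (.inr t) => (ρ (gen t.1) - 1) ((ρ (gen t.2.1) - 1) x)

def S : Submodule (ZMod 3) A := Submodule.span (ZMod 3) (Set.range (fam ρ x))

theorem fam_mem (t) : fam ρ x t ∈ S ρ x := Submodule.subset_span ⟨t, rfl⟩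

include hρ in
theorem S_u (i : Fin n) (a : A) (ha : a ∈ S ρ x) : (ρ (gen i) - 1) a ∈ S ρ x := by
  have : (S ρ x).map (ρ (gen i) - 1) ≤ S ρ x := by
    conv_lhs => unfold S
    rw [Submodule.map_span_le]
    rintro _ ⟨t | j | t, rfl⟩
    · exact fam_mem ρ x (.inr (.inl i))
    · change (ρ (gen i) - 1) ((ρ (gen j) - 1) x) ∈ _
      rcases lt_trichotomy i j with h | h | h
      · have e := LinearMap.congr_fun (anti end3 ρ hρ (gen i) (gen j)) x
        rw [Module.End.mul_apply] at e
        rw [e]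
        exact neg_mem (fam_mem ρ x (.inr (.inr ⟨j, i, h⟩)))
      · subst h
        have e := LinearMap.congr_fun (hρ (gen i)) x
        rw [Module.End.mul_apply] at e
        rw [e]
        exact zero_mem _
      · exact fam_mem ρ x (.inr (.inr ⟨i, j, h⟩))
    · have e := LinearMap.congr_fun (triple end3 ρ hρ (gen i) (gen t.1) (gen t.2.1)) x
      rw [Module.End.mul_apply, Module.End.mul_apply] at e
      change (ρ (gen i) - 1) ((ρ (gen t.1) - 1) ((ρ (gen t.2.1) - 1) x)) ∈ _
      rw [e]
      exact zero_mem _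
  exact this ⟨a, ha, rfl⟩

include hρ in
theorem S_gen (i : Fin n) (a : A) (ha : a ∈ S ρ x) : ρ (gen i) a ∈ S ρ x := by
  have := add_mem (S_u ρ hρ x i a ha) ha
  simpa using this

theorem card_le_of_S (h : S ρ x = ⊤) : Finite A ∧ Nat.card A ≤ 3 ^ (1 + n + n.choose 2) := by
  have hs : Function.Surjective (Fintype.linearCombination (ZMod 3) (fam ρ x)) := by
    rw [← LinearMap.range_eq_top, Fintype.range_linearCombination]
    exact h
  refine ⟨Finite.of_surjective _ hs, ?_⟩
  have := Nat.card_le_card_of_surjective _ hs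
  rw [Nat.card_eq_fintype_card (α := _ → _), Fintype.card_fun, Fintype.card_sum, Fintype.card_sum,
    card_T, ZMod.card, Fintype.card_fin, Fintype.card_unit, ← add_assoc] at this
  exact this
end span

def xx (n : ℕ) : Burnside3 (n + 1) := gen (Fin.last n)

def M (n : ℕ) : Subgroup (Burnside3 (n + 1)) := Subgroup.normalClosure {xx n}

instance (n : ℕ) : (M n).Normal := Subgroup.normalClosure_normal

theorem xx_mem (n : ℕ) : xx n ∈ M n := Subgroup.subset_normalClosure rfl

theorem M_comm {n : ℕ} (a b : Burnside3 (n + 1)) (ha : a ∈ M n) (hb : b ∈ M n) :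
    a * b = b * a := by
  -- x is centralised by M
  have h1 : M n ≤ Subgroup.centralizer {xx n} := by
    refine (Subgroup.closure_le _).2 ?_
    intro y hy
    rw [Group.mem_conjugatesOfSet_iff] at hy
    obtain ⟨_, rfl, hy⟩ := hy
    rw [isConj_iff] at hy
    obtain ⟨c, rfl⟩ := hy
    rw [SetLike.mem_coe, Subgroup.mem_centralizer_singleton_iff]
    exact (conj_comm pow3 _ _).symm
  have h2 : M n ≤ Subgroup.centralizer (M n : Set (Burnside3 (n + 1))) := by
    refine (Subgroup.closure_le _).2 ?_
    intro y hy
    rw [Group.mem_conjugatesOfSet_iff] at hy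
    obtain ⟨_, rfl, hy⟩ := hy
    rw [isConj_iff] at hy
    obtain ⟨c, rfl⟩ := hy
    rw [SetLike.mem_coe, Subgroup.mem_centralizer_iff]
    intro m hm
    have h := h1 ((inferInstance : (M n).Normal).conj_mem m hm c⁻¹)
    rw [Subgroup.mem_centralizer_singleton_iff] at h
    have h' := congrArg (fun z => c * z * c⁻¹) h
    simpa [mul_assoc] using h'
  exact (Subgroup.mem_centralizer_iff.1 (h2 hb)) a ha

instance (n : ℕ) : CommGroup (M n) :=
  { (inferInstance : Group (M n)) with
    mul_comm := fun a b => Subtype.ext (M_comm _ _ a.2 b.2) }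

instance (n : ℕ) : Module (ZMod 3) (Additive (M n)) :=
  AddCommGroup.zmodModule (n := 3) (fun a => by
    change Additive.ofMul (a.toMul ^ 3) = 0
    have : a.toMul ^ 3 = 1 := Subtype.ext (pow3 _)
    rw [this]; rfl)

def sec (n : ℕ) : Burnside3 n →* Burnside3 (n + 1) :=
  lift (FreeGroup.lift (fun i => gen i.castSucc)) (fun _ => pow3 _)

theorem sec_gen {n : ℕ} (i : Fin n) : sec n (gen i) = gen i.castSucc := by
  simp [sec, lift_gen]

def rM (n : ℕ) : Burnside3 n →* Module.End (ZMod 3) (Additive (M n)) where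
  toFun g := AddMonoidHom.toZModLinearMap 3
    (MonoidHom.toAdditive (MulAut.conjNormal (sec n g) : M n ≃* M n).toMonoidHom)
  map_one' := by
    ext a
    simp
  map_mul' g h := by
    ext a
    simp

theorem rM_apply {n : ℕ} (g : Burnside3 n) (a : Additive (M n)) :
    ((rM n g a).toMul : Burnside3 (n + 1)) = sec n g * a.toMul * (sec n g)⁻¹ := rfl

theorem rM_sq {n : ℕ} (g : Burnside3 n) : (rM n g - 1) * (rM n g - 1) = 0 := by
  have h : 1 + rM n g + rM n g * rM n g = 0 := by
    refine LinearMap.ext fun a => ?_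
    apply Additive.toMul.injective
    apply Subtype.ext
    change (a.toMul : Burnside3 (n + 1)) * (sec n g * a.toMul * (sec n g)⁻¹) *
      (sec n g * (sec n g * a.toMul * (sec n g)⁻¹) * (sec n g)⁻¹) = 1
    generalize (a.toMul : Burnside3 (n + 1)) = m
    generalize sec n g = k
    have h1 := pow3 (m * k)
    have h2 := pow3 k
    calc _ = (m * k) ^ 3 * (k ^ 3)⁻¹ := by
          simp only [pow_succ, pow_zero, one_mul]; simp [mul_assoc]
      _ = 1 := by rw [h1, h2]; simp
  have : (rM n g - 1) * (rM n g - 1) = 1 + rM n g + rM n g * rM n g - 3 * rM n g := by noncomm_ring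
  rw [this, h, end3]; simp

def SS (n : ℕ) : Submodule (ZMod 3) (Additive (M n)) := S (rM n) (Additive.ofMul ⟨xx n, xx_mem n⟩)

def SH (n : ℕ) : Subgroup (Burnside3 (n + 1)) :=
  (AddSubgroup.toSubgroup' (SS n).toAddSubgroup).map (M n).subtype

theorem mem_SH {n : ℕ} (h : Burnside3 (n + 1)) :
    h ∈ SH n ↔ ∃ a : Additive (M n), a ∈ SS n ∧ (a.toMul : Burnside3 (n + 1)) = h := Iff.rfl

theorem SH_conj {n : ℕ} (g : Burnside3 (n + 1)) : ∀ h ∈ SH n, g * h * g⁻¹ ∈ SH n := by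
  apply gen_induct' (fun g => ∀ h ∈ SH n, g * h * g⁻¹ ∈ SH n)
  · intro h hh; simpa using hh
  · intro a b ha hb h hh
    have := ha _ (hb h hh)
    simpa [mul_assoc] using this
  · intro i
    refine Fin.lastCases ?_ (fun i => ?_) i
    · intro h hh
      obtain ⟨a, ha, rfl⟩ := (mem_SH _).1 hh
      have := M_comm _ _ (xx_mem n) a.toMul.2
      change xx n * _ * (xx n)⁻¹ ∈ _
      rw [this, mul_inv_cancel_right]
      exact hh
    · intro h hh
      obtain ⟨a, ha, rfl⟩ := (mem_SH _).1 hh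
      rw [mem_SH]
      refine ⟨rM n (gen i) a, S_gen _ rM_sq _ i a ha, ?_⟩
      rw [rM_apply, sec_gen]

theorem SS_top (n : ℕ) : SS n = ⊤ := by
  have hn : (SH n).Normal := ⟨fun h hh g => SH_conj g h hh⟩
  have : M n ≤ SH n := by
    apply Subgroup.normalClosure_le_normal
    rintro _ rfl
    exact (mem_SH _).2 ⟨_, fam_mem _ _ (.inl ()), rfl⟩
  rw [eq_top_iff]
  intro a _
  obtain ⟨b, hb, e⟩ := (mem_SH _).1 (this a.toMul.2)
  have : b = a := Additive.toMul.injective (Subtype.ext e)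
  exact this ▸ hb

theorem card_M (n : ℕ) : Finite (M n) ∧ Nat.card (M n) ≤ 3 ^ (1 + n + n.choose 2) :=
  card_le_of_S (A := Additive (M n)) (rM n) _ (SS_top n)

theorem surjM (n : ℕ) :
    Function.Surjective (fun p : Burnside3 n × M n => sec n p.1 * (p.2 : Burnside3 (n + 1))) := by
  intro h
  apply gen_induct' (fun h => ∃ p : Burnside3 n × M n, sec n p.1 * (p.2 : Burnside3 (n + 1)) = h)
  · exact ⟨1, by simp⟩
  · rintro _ _ ⟨⟨g, m, hm⟩, rfl⟩ ⟨⟨g', m', hm'⟩, rfl⟩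
    refine ⟨⟨g * g', ⟨(sec n g')⁻¹ * m * (sec n g')⁻¹⁻¹ * m', mul_mem
      ((inferInstance : (M n).Normal).conj_mem m hm _) hm'⟩⟩, ?_⟩
    simp [mul_assoc]
  · intro i
    refine Fin.lastCases ?_ (fun i => ?_) i
    · exact ⟨⟨1, ⟨xx n, xx_mem n⟩⟩, by simp [xx]⟩
    · exact ⟨⟨gen i, 1⟩, by simp [sec_gen]⟩

theorem main (n : ℕ) : Finite (Burnside3 n) ∧
    Nat.card (Burnside3 n) = 3 ^ (n + n.choose 2 + n.choose 3) := by
  induction n with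
  | zero =>
    have : Subsingleton (Burnside3 0) := by
      have : ∀ g : Burnside3 0, g = 1 :=
        gen_induct' (fun g => g = 1) rfl (by rintro _ _ rfl rfl; simp) (fun i => i.elim0)
      exact ⟨fun a b => (this a).trans (this b).symm⟩
    exact ⟨inferInstance, by simp [Nat.card_unique]⟩
  | succ n ih =>
    obtain ⟨hf, hc⟩ := ih
    obtain ⟨hM, hMc⟩ := card_M n
    have hfin : Finite (Burnside3 (n + 1)) := Finite.of_surjective _ (surjM n)
    refine ⟨hfin, ?_⟩
    have e : 3 ^ (n + 1 + (n + 1).choose 2 + (n + 1).choose 3) =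
        Nat.card (Burnside3 n) * 3 ^ (1 + n + n.choose 2) := by
      rw [hc, ← pow_add]
      congr 1
      have h2 : (n + 1).choose 2 = n.choose 1 + n.choose 2 := Nat.choose_succ_succ n 1
      have h3 : (n + 1).choose 3 = n.choose 2 + n.choose 3 := Nat.choose_succ_succ n 2
      rw [Nat.choose_one_right] at h2
      omega
    rw [e]
    apply le_antisymm
    · refine (Nat.card_le_card_of_surjective _ (surjM n)).trans ?_
      rw [Nat.card_prod]
      exact Nat.mul_le_mul_left _ hMc
    · rw [← card_SD]
      exact Nat.card_le_card_of_surjective _ (toSD_surj n)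

end upper

end B3

/-- For every `n ≥ 1`, the free Burnside group `B(n,3)` is finite, of cardinality
exactly `3 ^ (n + C(n,2) + C(n,3))`. -/
theorem card_Burnside3 (n : ℕ) (hn : 1 ≤ n) :
    Finite (Burnside3 n) ∧
    Nat.card (Burnside3 n) = 3 ^ (n + n.choose 2 + n.choose 3) := by
  exact B3.main n
end

section
/- The elements e₁ = [[x₂,x₃],x₄], e₂ = [[x₁,x₃],x₄], e₃ = [[x₁,x₂],x₄], e₄ = [[x₁,x₂],x₃] generate the third term γ₃(B(4,3)) of the lower central series of B(4,3), and γ₃(B(4,3)) is an elementary abelian 3-group of order 3⁴ = 81 (i.e., it is commutative, every element has order dividing 3, and it has cardinality 81). -/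
/-- The images `x₁, x₂, x₃, x₄` of the free generators in `B(4,3)`. -/
def x (i : Fin 4) : B43 := QuotientGroup.mk (FreeGroup.of i)

open scoped commutatorElement

/-- The elements `e₁ = [[x₂,x₃],x₄]`, `e₂ = [[x₁,x₃],x₄]`, `e₃ = [[x₁,x₂],x₄]`,
`e₄ = [[x₁,x₂],x₃]` of `B(4,3)`, where `⁅a, b⁆ = a * b * a⁻¹ * b⁻¹`. -/
def e : Fin 4 → B43
  | 0 => ⁅⁅x 1, x 2⁆, x 3⁆
  | 1 => ⁅⁅x 0, x 2⁆, x 3⁆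
  | 2 => ⁅⁅x 0, x 1⁆, x 3⁆
  | 3 => ⁅⁅x 0, x 1⁆, x 2⁆


/-- Model group of exponent 3 and class 3. -/
@[ext] structure MG where
  a : ZMod 3
  b : ZMod 3
  c : ZMod 3
  p : ZMod 3
  q : ZMod 3
  r : ZMod 3
  s : ZMod 3

namespace MG

instance : DecidableEq MG := fun g h =>
  decidable_of_iff (g.a = h.a ∧ g.b = h.b ∧ g.c = h.c ∧ g.p = h.p ∧ g.q = h.q ∧ g.r = h.r ∧ g.s = h.s)
    (by rw [MG.ext_iff])

instance : Mul MG := ⟨fun g h =>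
  ⟨g.a + h.a, g.b + h.b, g.c + h.c + g.a * h.b - g.b * h.a,
   g.p + h.p, g.q + g.p * h.a + h.q, g.r + g.p * h.b + h.r,
   g.s + g.p * h.c + g.q * h.b - g.r * h.a + h.s⟩⟩

instance : One MG := ⟨⟨0, 0, 0, 0, 0, 0, 0⟩⟩

instance : Inv MG := ⟨fun g => g * g⟩

theorem mul_def (g h : MG) : g * h =
  ⟨g.a + h.a, g.b + h.b, g.c + h.c + g.a * h.b - g.b * h.a,
   g.p + h.p, g.q + g.p * h.a + h.q, g.r + g.p * h.b + h.r,
   g.s + g.p * h.c + g.q * h.b - g.r * h.a + h.s⟩ := rfl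

theorem one_def : (1 : MG) = ⟨0, 0, 0, 0, 0, 0, 0⟩ := rfl

theorem inv_def (g : MG) : g⁻¹ = g * g := rfl

theorem cube (g : MG) : g * g * g = 1 := by
  have h3 : (3 : ZMod 3) = 0 := rfl
  simp only [mul_def, one_def, MG.mk.injEq]
  refine ⟨?_, ?_, ?_, ?_, ?_, ?_, ?_⟩
  · linear_combination g.a * h3
  · linear_combination g.b * h3
  · linear_combination g.c * h3
  · linear_combination g.p * h3
  · linear_combination (g.q + g.p * g.a) * h3
  · linear_combination (g.r + g.p * g.b) * h3
  · linear_combination (g.s + g.p * g.c + g.q * g.b - g.r * g.a) * h3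

instance : Group MG := Group.ofLeftAxioms
  (by
    intro g h k
    simp only [mul_def, MG.mk.injEq]
    refine ⟨?_, ?_, ?_, ?_, ?_, ?_, ?_⟩ <;> ring)
  (by
    intro g
    simp [mul_def, one_def])
  (by
    intro g
    rw [inv_def]
    exact cube g)

theorem pow_three' (g : MG) : g ^ 3 = 1 := by
  rw [pow_succ, pow_two]; exact cube g

/-- First generator. -/
def A : MG := ⟨0, 0, 0, 1, 0, 0, 0⟩
/-- Second generator. -/
def B : MG := ⟨1, 0, 0, 0, 0, 0, 0⟩
/-- Third generator. -/
def C : MG := ⟨0, 1, 0, 0, 0, 0, 0⟩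

theorem comm_ne : ⁅⁅A, B⁆, C⁆ ≠ 1 := by decide

end MG

/-- Homomorphism from `B43` to the model group. -/
def toMG (f : Fin 4 → MG) : B43 →* MG :=
  QuotientGroup.lift _ (FreeGroup.lift f) (by
    have : Subgroup.normalClosure {w : FreeGroup (Fin 4) | ∃ v, w = v ^ 3}
        ≤ (FreeGroup.lift f).ker := by
      apply Subgroup.normalClosure_le_normal
      rintro w ⟨v, rfl⟩
      simp [MonoidHom.mem_ker, MG.pow_three']
    intro w hw
    exact this hw)

theorem toMG_x (f : Fin 4 → MG) (i : Fin 4) : toMG f (x i) = f i := by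
  simp [toMG, x]

theorem B43_cube (g : B43) : g ^ 3 = 1 := by
  induction g using QuotientGroup.induction_on with
  | H w =>
    rw [← QuotientGroup.mk_pow, QuotientGroup.eq_one_iff]
    exact Subgroup.subset_normalClosure ⟨w, rfl⟩

theorem B43_gen : Subgroup.closure (Set.range x) = ⊤ := by
  have h : Set.range x = (QuotientGroup.mk' (Subgroup.normalClosure {w : FreeGroup (Fin 4) | ∃ v, w = v ^ 3})) '' (Set.range FreeGroup.of) := by
    rw [← Set.range_comp]; rfl
  rw [h, ← MonoidHom.map_closure, FreeGroup.closure_range_of, ← MonoidHom.range_eq_map]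
  exact QuotientGroup.range_mk' _

section Exp3

variable {G : Type*} [Group G]

theorem exp3_comm_conj (h3 : ∀ g : G, g ^ 3 = 1) (a g : G) : Commute a (g * a * g⁻¹) := by
  have hi : g⁻¹ = g * g := by
    rw [inv_eq_iff_mul_eq_one, ← h3 g, pow_succ, pow_two, mul_assoc]
  have e1 : (g * a) ^ 3 = 1 := h3 _
  have e2 : (g⁻¹ * a) ^ 3 = 1 := h3 _
  have k1 : (g * a * g⁻¹) * (g⁻¹ * a * g) * a = 1 := by
    rw [← e1]
    have : g⁻¹ * g⁻¹ = g := by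
      rw [← mul_inv_rev, ← hi, inv_inv]
    calc _ = g * a * (g⁻¹ * g⁻¹) * a * g * a := by group
      _ = g * a * g * a * g * a := by rw [this]
      _ = _ := by simp [pow_succ, mul_assoc]
  have k2 : (g⁻¹ * a * g) * (g * a * g⁻¹) * a = 1 := by
    rw [← e2]
    calc _ = g⁻¹ * a * (g * g) * a * g⁻¹ * a := by group
      _ = g⁻¹ * a * g⁻¹ * a * g⁻¹ * a := by rw [hi]
      _ = _ := by simp [pow_succ, mul_assoc]
  -- with u = conj by g, v = conj by inverse: u v a = 1, v u a = 1
  generalize g * a * g⁻¹ = u at *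
  generalize g⁻¹ * a * g = v at *
  have ha : a = (u * v)⁻¹ := (inv_eq_of_mul_eq_one_right k1).symm
  have hc : u * v = v * u := mul_right_cancel (k1.trans k2.symm)
  have : Commute (u * v) u := by
    show u * v * u = u * (u * v)
    rw [hc, ← mul_assoc, ← hc, mul_assoc]
  rw [ha]
  exact this.inv_left

theorem exp3_comm_conj2 (h3 : ∀ g : G, g ^ 3 = 1) (a g h : G) :
    Commute (g * a * g⁻¹) (h * a * h⁻¹) := by
  have := exp3_comm_conj h3 (g * a * g⁻¹) (h * g⁻¹)
  have e : h * g⁻¹ * (g * a * g⁻¹) * (h * g⁻¹)⁻¹ = h * a * h⁻¹ := by group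
  rwa [e] at this

theorem exp3_engel (h3 : ∀ g : G, g ^ 3 = 1) (g n : G) : Commute g ⁅g, n⁆ := by
  have h1 := exp3_comm_conj h3 g n
  have e : ⁅g, n⁆ = g * (n * g * n⁻¹)⁻¹ := by
    rw [commutatorElement_def]; group
  rw [e]
  exact (Commute.refl g).mul_right h1.inv_right

theorem ring_three {R : Type*} [Ring R] (ρ : G →* R) (h3 : (3 : R) = 0)
    (hs : ∀ g, (ρ g - 1) * (ρ g - 1) = 0) (g h k : G) :
    (ρ g - 1) * (ρ h - 1) * (ρ k - 1) = 0 := by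
  have exp : ∀ g h, (ρ g - 1) * (ρ h - 1) + (ρ h - 1) * (ρ g - 1) +
      (ρ h - 1) * (ρ g - 1) * (ρ h - 1) + (ρ g - 1) * (ρ h - 1) * (ρ g - 1) +
      (ρ g - 1) * (ρ h - 1) * (ρ g - 1) * (ρ h - 1) = 0 := by
    intro g h
    have h1 := hs (g * h)
    have hg := hs g
    have hh := hs h
    rw [map_mul] at h1
    have e1 : ρ g * ρ h - 1 = (ρ g - 1) + (ρ h - 1) + (ρ g - 1) * (ρ h - 1) := by noncomm_ring
    rw [e1] at h1
    generalize ρ g - 1 = X at *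
    generalize ρ h - 1 = Y at *
    have hX2 : ∀ Z, X * (X * Z) = 0 := fun Z => by rw [← mul_assoc, hg, zero_mul]
    have hY2 : ∀ Z, Y * (Y * Z) = 0 := fun Z => by rw [← mul_assoc, hh, zero_mul]
    simp only [mul_add, add_mul, mul_assoc, hg, hh, hX2, hY2, mul_zero, zero_add, add_zero] at h1
    rw [← h1]
    simp only [mul_assoc]
    abel
  have tri : ∀ g h, (ρ g - 1) * (ρ h - 1) * (ρ g - 1) = 0 := by
    intro g h
    have h1 := exp g h
    have hg := hs g
    have hh := hs h
    generalize ρ g - 1 = X at *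
    generalize ρ h - 1 = Y at *
    have hX2 : ∀ Z, X * (X * Z) = 0 := fun Z => by rw [← mul_assoc, hg, zero_mul]
    have hY2 : ∀ Z, Y * (Y * Z) = 0 := fun Z => by rw [← mul_assoc, hh, zero_mul]
    have h2 := congrArg (fun t => X * t * (1 - Y)) h1
    simp only [mul_add, add_mul, mul_sub, mul_one, mul_assoc, hg, hh, hX2, hY2, mul_zero,
      zero_mul, zero_add, add_zero, sub_zero] at h2
    simpa [mul_assoc] using h2
  have anti : ∀ g h, (ρ g - 1) * (ρ h - 1) + (ρ h - 1) * (ρ g - 1) = 0 := by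
    intro g h
    have h1 := exp g h
    rw [tri g h, tri h g] at h1
    simpa using h1
  have a1 := anti k (g * h)
  have a2 := anti k g
  have a3 := anti k h
  rw [map_mul] at a1
  have e1 : ρ g * ρ h - 1 = (ρ g - 1) + (ρ h - 1) + (ρ g - 1) * (ρ h - 1) := by noncomm_ring
  rw [e1] at a1
  generalize ρ g - 1 = X at *
  generalize ρ h - 1 = Y at *
  generalize ρ k - 1 = Z at *
  have e3 : X * Y * Z = 3 * (X * Y * Z) - ((Z * (X + Y + X * Y) + (X + Y + X * Y) * Z)
      - (Z * X + X * Z) - (Z * Y + Y * Z) - (Z * X + X * Z) * Y + X * (Z * Y + Y * Z)) := by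
    noncomm_ring
  rw [e3, a1, a2, a3, h3]
  simp

/-- The additive form of an action on a commutative group. -/
def conjRep {A : Type*} [CommGroup A] (φ : G →* MulAut A) :
    G →* AddMonoid.End (Additive A) where
  toFun g := MonoidHom.toAdditive (φ g).toMonoidHom
  map_one' := by
    ext n
    show Additive.ofMul ((φ 1) n.toMul) = n
    rw [map_one]; rfl
  map_mul' g h := by
    ext n
    show Additive.ofMul ((φ (g * h)) n.toMul) = Additive.ofMul (φ g (φ h n.toMul))
    rw [map_mul]; rfl

theorem action_three {A : Type*} [CommGroup A] (φ : G →* MulAut A) (h3 : ∀ a : A, a ^ 3 = 1)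
    (hs : ∀ g a, φ g (φ g a / a) / (φ g a / a) = 1) (k h g : G) (a : A) :
    φ k (φ h (φ g a / a) / (φ g a / a)) / (φ h (φ g a / a) / (φ g a / a)) = 1 := by
  have key := ring_three (conjRep φ) (by
      ext n
      exact h3 n.toMul) (by
      intro g
      ext n
      exact hs g n.toMul) k h g
  exact DFunLike.congr_fun key (Additive.ofMul a)

theorem exp3_four (h3 : ∀ g : G, g ^ 3 = 1) (k h g a : G) : ⁅k, ⁅h, ⁅g, a⁆⁆⁆ = 1 := by
  have : IsMulCommutative (Subgroup.normalClosure {a}) := by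
    apply Subgroup.isMulCommutative_closure
    intro u hu v hv
    rw [Group.mem_conjugatesOfSet_iff] at hu hv
    obtain ⟨_, rfl, hu⟩ := hu
    obtain ⟨_, rfl, hv⟩ := hv
    obtain ⟨c, rfl⟩ := isConj_iff.1 hu
    obtain ⟨d, rfl⟩ := isConj_iff.1 hv
    exact exp3_comm_conj2 h3 _ c d
  have hd : ∀ (g : G) (n : Subgroup.normalClosure {a}),
      ((MulAut.conjNormal g n / n : Subgroup.normalClosure {a}) : G) = ⁅g, (n : G)⁆ := by
    intro g n
    simp [commutatorElement_def, div_eq_mul_inv]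
  letI : CommGroup (Subgroup.normalClosure {a}) :=
    { (inferInstance : Group (Subgroup.normalClosure {a})) with
      mul_comm := fun u v => this.is_comm.comm u v }
  have key := action_three (A := Subgroup.normalClosure {a}) MulAut.conjNormal
    (fun n => Subtype.ext (h3 n.1))
    (fun g n => Subtype.ext (by
      refine (hd _ _).trans ?_
      have := hd g n
      refine (congrArg _ this).trans ?_
      exact commutatorElement_eq_one_iff_commute.2 (exp3_engel h3 g _))) k h g
      ⟨a, Subgroup.subset_normalClosure rfl⟩
  have k3 := congrArg Subtype.val key
  refine Eq.trans ?_ k3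
  refine Eq.trans ?_ (hd _ _).symm
  refine congrArg _ ?_
  refine Eq.trans ?_ (hd _ _).symm
  refine congrArg _ ?_
  exact (hd g ⟨a, Subgroup.subset_normalClosure rfl⟩).symm

theorem exp3_inv (h3 : ∀ g : G, g ^ 3 = 1) (g : G) : g⁻¹ = g * g := by
  rw [inv_eq_iff_mul_eq_one, ← h3 g, pow_succ, pow_two, mul_assoc]

theorem exp3_central (h3 : ∀ g : G, g ^ 3 = 1) (a b c : G) :
    ⁅⁅a, b⁆, c⁆ ∈ Subgroup.center G := by
  rw [← commutatorElement_inv]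
  apply inv_mem
  rw [Subgroup.mem_center_iff]
  intro g
  exact commutatorElement_eq_one_iff_mul_comm.1 (exp3_four h3 g c a b)

theorem comm_mul_left {u v c : G} (h : ⁅v, c⁆ ∈ Subgroup.center G) :
    ⁅u * v, c⁆ = ⁅v, c⁆ * ⁅u, c⁆ := by
  have h1 := Subgroup.mem_center_iff.1 h u
  have : ⁅u * v, c⁆ = u * ⁅v, c⁆ * u⁻¹ * ⁅u, c⁆ := by
    simp only [commutatorElement_def]; group
  rw [this, h1]; group

theorem comm_mul_right {u v c : G} (h : ⁅c, v⁆ ∈ Subgroup.center G) :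
    ⁅c, u * v⁆ = ⁅c, u⁆ * ⁅c, v⁆ := by
  have h1 := Subgroup.mem_center_iff.1 h u
  have : ⁅c, u * v⁆ = ⁅c, u⁆ * (u * ⁅c, v⁆ * u⁻¹) := by
    simp only [commutatorElement_def]; group
  rw [this, h1]; group

theorem T_right (h3 : ∀ g : G, g ^ 3 = 1) (a b c d : G) :
    ⁅⁅a, b⁆, c * d⁆ = ⁅⁅a, b⁆, c⁆ * ⁅⁅a, b⁆, d⁆ :=
  comm_mul_right (exp3_central h3 _ _ _)

theorem T_mid (h3 : ∀ g : G, g ^ 3 = 1) (a b d c : G) :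
    ⁅⁅a, b * d⁆, c⁆ = ⁅⁅a, d⁆, c⁆ * ⁅⁅a, b⁆, c⁆ := by
  have e1 : ⁅a, b * d⁆ = ⁅a, b⁆ * (⁅⁅a, d⁆, b⁆⁻¹ * ⁅a, d⁆) := by
    simp only [commutatorElement_def]; group
  have hz := inv_mem (exp3_central h3 a d b)
  generalize ⁅⁅a, d⁆, b⁆⁻¹ = z at *
  have hzc : ⁅z, c⁆ = 1 :=
    commutatorElement_eq_one_iff_mul_comm.2 (Subgroup.mem_center_iff.1 hz c).symm
  have e2 : ⁅z * ⁅a, d⁆, c⁆ = ⁅⁅a, d⁆, c⁆ := by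
    rw [comm_mul_left (exp3_central h3 _ _ _), hzc, mul_one]
  rw [e1, comm_mul_left, e2]
  rw [e2]
  exact exp3_central h3 _ _ _

theorem T_swap12 (h3 : ∀ g : G, g ^ 3 = 1) (a b c : G) :
    ⁅⁅b, a⁆, c⁆ = ⁅⁅a, b⁆, c⁆⁻¹ := by
  rw [eq_inv_iff_mul_eq_one, ← comm_mul_left (exp3_central h3 _ _ _), ← commutatorElement_inv b a,
    inv_mul_cancel, commutatorElement_one_left]

theorem T_self23 (h3 : ∀ g : G, g ^ 3 = 1) (a b : G) : ⁅⁅a, b⁆, b⁆ = 1 := by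
  rw [commutatorElement_eq_one_iff_commute, ← commutatorElement_inv]
  exact (exp3_engel h3 b a).symm.inv_left

theorem T_self13 (h3 : ∀ g : G, g ^ 3 = 1) (a b : G) : ⁅⁅a, b⁆, a⁆ = 1 := by
  rw [T_swap12 h3, T_self23 h3, inv_one]

theorem T_swap23 (h3 : ∀ g : G, g ^ 3 = 1) (a b c : G) :
    ⁅⁅a, c⁆, b⁆ = ⁅⁅a, b⁆, c⁆⁻¹ := by
  have h := T_self23 h3 a (b * c)
  rw [T_mid h3, T_right h3, T_right h3, T_self23 h3, T_self23 h3, mul_one, one_mul] at h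
  exact eq_inv_of_mul_eq_one_left h

end Exp3

theorem B43_ind {S : B43 → Prop} (hx : ∀ i, S (x i)) (hm : ∀ a b, S a → S b → S (a * b))
    (g : B43) : S g := by
  have hg : g ∈ Subgroup.closure (Set.range x) := by rw [B43_gen]; trivial
  induction hg using Subgroup.closure_induction with
  | mem y hy => obtain ⟨i, rfl⟩ := hy; exact hx i
  | one =>
    rw [← B43_cube (x 0), pow_succ, pow_two]
    exact hm _ _ (hm _ _ (hx 0) (hx 0)) (hx 0)
  | mul a b _ _ ha hb => exact hm a b ha hb
  | inv a _ ha => rw [exp3_inv B43_cube]; exact hm a a ha ha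

/-- The subgroup generated by the four triple commutators. -/
def EE : Subgroup B43 := Subgroup.closure ({e 0, e 1, e 2, e 3} : Set B43)

theorem e_mem (i : Fin 4) : e i ∈ EE := by
  apply Subgroup.subset_closure
  fin_cases i <;> simp

theorem e_central (i : Fin 4) : e i ∈ Subgroup.center B43 := by
  fin_cases i <;> exact exp3_central B43_cube _ _ _

theorem EE_le_center : EE ≤ Subgroup.center B43 := by
  rw [EE, Subgroup.closure_le]
  rintro y (rfl | rfl | rfl | rfl) <;> exact e_central _

theorem T_gen_lt {i j k : Fin 4} (hij : i < j) (hjk : j < k) : ⁅⁅x i, x j⁆, x k⁆ ∈ EE := by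
  have h : (i = 1 ∧ j = 2 ∧ k = 3) ∨ (i = 0 ∧ j = 2 ∧ k = 3) ∨ (i = 0 ∧ j = 1 ∧ k = 3) ∨
      (i = 0 ∧ j = 1 ∧ k = 2) := by omega
  rcases h with ⟨rfl, rfl, rfl⟩ | ⟨rfl, rfl, rfl⟩ | ⟨rfl, rfl, rfl⟩ | ⟨rfl, rfl, rfl⟩
  · exact e_mem 0
  · exact e_mem 1
  · exact e_mem 2
  · exact e_mem 3

theorem T_gen_lt' {i j : Fin 4} (hij : i < j) (k : Fin 4) : ⁅⁅x i, x j⁆, x k⁆ ∈ EE := by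
  rcases lt_trichotomy k j with h | rfl | h
  · rw [T_swap23 B43_cube]
    apply inv_mem
    rcases lt_trichotomy k i with h' | rfl | h'
    · rw [T_swap12 B43_cube]
      exact inv_mem (T_gen_lt h' hij)
    · rw [commutatorElement_self, commutatorElement_one_left]; exact one_mem _
    · exact T_gen_lt h' h
  · rw [T_self23 B43_cube]; exact one_mem _
  · exact T_gen_lt hij h

theorem T_gen (i j k : Fin 4) : ⁅⁅x i, x j⁆, x k⁆ ∈ EE := by
  rcases lt_trichotomy i j with h | rfl | h
  · exact T_gen_lt' h k
  · rw [commutatorElement_self, commutatorElement_one_left]; exact one_mem _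
  · rw [T_swap12 B43_cube]; exact inv_mem (T_gen_lt' h k)

theorem T_mem (a b c : B43) : ⁅⁅a, b⁆, c⁆ ∈ EE := by
  refine B43_ind (S := fun c => ⁅⁅a, b⁆, c⁆ ∈ EE) (fun k => ?_) (fun c d hc hd => ?_) c
  · refine B43_ind (S := fun b => ⁅⁅a, b⁆, x k⁆ ∈ EE) (fun j => ?_) (fun c d hc hd => ?_) b
    · refine B43_ind (S := fun a => ⁅⁅a, x j⁆, x k⁆ ∈ EE) (fun i => T_gen i j k)
        (fun c d hc hd => ?_) a
      rw [T_swap12 B43_cube, T_mid B43_cube, mul_inv_rev, ← T_swap12 B43_cube,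
        ← T_swap12 B43_cube]
      exact mul_mem hc hd
    · rw [T_mid B43_cube]; exact mul_mem hd hc
  · rw [T_right B43_cube]; exact mul_mem hc hd

theorem gamma_eq : EE = (⊤ : Subgroup B43).lowerCentralSeries 2 := by
  apply le_antisymm
  · rw [EE, Subgroup.closure_le]
    have : ∀ a b c : B43, ⁅⁅a, b⁆, c⁆ ∈ (⊤ : Subgroup B43).lowerCentralSeries 2 := fun a b c =>
      Subgroup.commutator_mem_commutator
        (Subgroup.commutator_mem_commutator (Subgroup.mem_top a) (Subgroup.mem_top b))
        (Subgroup.mem_top c)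
    rintro y (rfl | rfl | rfl | rfl) <;> exact this _ _ _
  · have h : ∀ u ∈ (⊤ : Subgroup B43).lowerCentralSeries 1, ∀ c, ⁅u, c⁆ ∈ EE := by
      intro u hu
      rw [Subgroup.mem_lowerCentralSeries_succ_iff] at hu
      induction hu using Subgroup.closure_induction with
      | mem y hy =>
        obtain ⟨a, _, b, _, rfl⟩ := hy
        exact T_mem a b
      | one => intro c; rw [commutatorElement_one_left]; exact one_mem _
      | mul a b _ _ ha hb =>
        intro c
        rw [comm_mul_left (EE_le_center (hb c))]
        exact mul_mem (hb c) (ha c)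
      | inv a _ ha =>
        intro c
        rw [exp3_inv B43_cube, comm_mul_left (EE_le_center (ha c))]
        exact mul_mem (ha c) (ha c)
    exact Subgroup.commutator_le.2 fun u hu c _ => h u hu c

theorem EE_comm {a b : B43} (ha : a ∈ EE) : a * b = b * a :=
  (Subgroup.mem_center_iff.1 (EE_le_center ha) b).symm

/-- Product of powers of the `e i`. -/
def ff (v : ZMod 3 × ZMod 3 × ZMod 3 × ZMod 3) : B43 :=
  e 0 ^ v.1.val * (e 1 ^ v.2.1.val * (e 2 ^ v.2.2.1.val * e 3 ^ v.2.2.2.val))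

theorem pow_val_add (g : B43) (a b : ZMod 3) : g ^ (a + b).val = g ^ a.val * g ^ b.val := by
  rw [ZMod.val_add, ← pow_add]
  conv_rhs => rw [← Nat.mod_add_div (a.val + b.val) 3, pow_add, pow_mul, B43_cube, one_pow, mul_one]

theorem ff_mem (v) : ff v ∈ EE :=
  mul_mem (pow_mem (e_mem _) _) (mul_mem (pow_mem (e_mem _) _)
    (mul_mem (pow_mem (e_mem _) _) (pow_mem (e_mem _) _)))

theorem comm4 {G : Type*} [Group G] {a b c d a' b' c' d' : G}
    (ha : ∀ g, a' * g = g * a') (hb' : ∀ g, b' * g = g * b') (hc' : ∀ g, c' * g = g * c') :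
    (a * a') * ((b * b') * ((c * c') * (d * d'))) =
      (a * (b * (c * d))) * (a' * (b' * (c' * d'))) := by
  have h1 : (a * (b * (c * d))) * (a' * (b' * (c' * d'))) =
      a * ((b * (c * d)) * a') * (b' * (c' * d')) := by group
  rw [h1, ← ha (b * (c * d))]
  have h2 : a * (a' * (b * (c * d))) * (b' * (c' * d')) =
      a * a' * (b * ((c * d) * b')) * (c' * d') := by group
  rw [h2, ← hb' (c * d)]
  have h3 : a * a' * (b * (b' * (c * d))) * (c' * d') =
      a * a' * (b * (b' * (c * (d * c')))) * d' := by group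
  rw [h3, ← hc' d]
  group

theorem ff_add (v w) : ff (v + w) = ff v * ff w := by
  simp only [ff, Prod.fst_add, Prod.snd_add, pow_val_add]
  apply comm4 <;> intro g <;> exact EE_comm (pow_mem (e_mem _) _)

theorem ff_range (g : B43) (hg : g ∈ EE) : ∃ v, ff v = g := by
  have h1 : (1 : ZMod 3).val = 1 := rfl
  induction hg using Subgroup.closure_induction with
  | mem y hy =>
    rcases hy with rfl | rfl | rfl | rfl
    · exact ⟨(1, 0, 0, 0), by simp [ff, h1]⟩
    · exact ⟨(0, 1, 0, 0), by simp [ff, h1]⟩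
    · exact ⟨(0, 0, 1, 0), by simp [ff, h1]⟩
    · exact ⟨(0, 0, 0, 1), by simp [ff, h1]⟩
  | one => exact ⟨0, by simp [ff]⟩
  | mul a b _ _ ha hb =>
    obtain ⟨v, rfl⟩ := ha
    obtain ⟨w, rfl⟩ := hb
    exact ⟨v + w, ff_add v w⟩
  | inv a _ ha =>
    obtain ⟨v, rfl⟩ := ha
    exact ⟨v + v, by rw [exp3_inv B43_cube, ff_add]⟩

theorem MG.pow_inj (a b : ZMod 3) (h : ⁅⁅MG.A, MG.B⁆, MG.C⁆ ^ a.val = ⁅⁅MG.A, MG.B⁆, MG.C⁆ ^ b.val) :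
    a = b := by
  revert a b
  decide

theorem toMG_T (f : Fin 4 → MG) (i j k : Fin 4) :
    toMG f ⁅⁅x i, x j⁆, x k⁆ = ⁅⁅f i, f j⁆, f k⁆ := by
  simp only [map_commutatorElement, toMG_x]

theorem toMG_e (f : Fin 4 → MG) :
    toMG f (e 0) = ⁅⁅f 1, f 2⁆, f 3⁆ ∧ toMG f (e 1) = ⁅⁅f 0, f 2⁆, f 3⁆ ∧
    toMG f (e 2) = ⁅⁅f 0, f 1⁆, f 3⁆ ∧ toMG f (e 3) = ⁅⁅f 0, f 1⁆, f 2⁆ :=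
  ⟨toMG_T f _ _ _, toMG_T f _ _ _, toMG_T f _ _ _, toMG_T f _ _ _⟩

theorem ff_inj : Function.Injective ff := by
  intro v w h
  have key : ∀ f, toMG f (ff v) = toMG f (ff w) := fun f => by rw [h]
  have k0 := key ![1, MG.A, MG.B, MG.C]
  have k1 := key ![MG.A, 1, MG.B, MG.C]
  have k2 := key ![MG.A, MG.B, 1, MG.C]
  have k3 := key ![MG.A, MG.B, MG.C, 1]
  simp [ff, toMG_e] at k0 k1 k2 k3
  exact Prod.ext (MG.pow_inj _ _ k0) (Prod.ext (MG.pow_inj _ _ k1)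
    (Prod.ext (MG.pow_inj _ _ k2) (MG.pow_inj _ _ k3)))

theorem EE_card : Nat.card EE = 81 := by
  have : Function.Bijective (fun v => (⟨ff v, ff_mem v⟩ : EE)) := by
    constructor
    · intro v w h
      exact ff_inj (congrArg Subtype.val h)
    · rintro ⟨g, hg⟩
      obtain ⟨v, rfl⟩ := ff_range g hg
      exact ⟨v, rfl⟩
  rw [← Nat.card_eq_of_bijective _ this]
  simp

/-- `e₁, e₂, e₃, e₄` generate the third term `γ₃(B(4,3))` of the lower central
series (Mathlib: `lowerCentralSeries B43 2`), which is an elementary abelian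
3-group of order `3⁴ = 81`: it is commutative, every element has order dividing 3,
and it has cardinality 81. -/
theorem e_generate_gamma3 :
    Subgroup.closure ({e 0, e 1, e 2, e 3} : Set B43) = (⊤ : Subgroup B43).lowerCentralSeries 2 ∧
    (∀ a b : ((⊤ : Subgroup B43).lowerCentralSeries 2), a * b = b * a) ∧
    (∀ a : ((⊤ : Subgroup B43).lowerCentralSeries 2), a ^ 3 = 1) ∧
    Nat.card ((⊤ : Subgroup B43).lowerCentralSeries 2) = 81 := by
  rw [← gamma_eq]
  refine ⟨rfl, ?_, ?_, EE_card⟩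
  · intro a b
    exact Subtype.ext (EE_comm a.2)
  · intro a
    exact Subtype.ext (B43_cube a.1)
end

section
/- For the free Burnside group B(5,3) of exponent 3 on five generators: the fourth term γ₄(B(5,3)) of its lower central series is trivial, and the third term γ₃(B(5,3)) has cardinality exactly 3¹⁰. -/
/-- The free Burnside group `B(5,3)` of exponent 3 on five generators:
the free group on five generators modulo the normal closure of all cubes. -/
abbrev B53 : Type :=
  FreeGroup (Fin 5) ⧸ Subgroup.normalClosure {w : FreeGroup (Fin 5) | ∃ v, w = v ^ 3}

namespace Burn

open scoped commutatorElement

section RingPart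

lemma ring_anti {R : Type*} [Ring R] (a b : R) (ha : a * a = 0) (hb : b * b = 0)
    (hab : (a * b + a + b) * (a * b + a + b) = 0) : a * b = -(b * a) := by
  have e : a * b * a * b + a * b * a + b * a * b + a * b + b * a = 0 := by
    have : (a * b + a + b) * (a * b + a + b)
      = a * b * a * b + a * b * a + b * a * b + a * b + b * a
        + a * (b * b) + a * a * b + a * a + b * b := by noncomm_ring
    rw [this] at hab
    simpa [ha, hb] using hab
  have e1 : a * b * a * b = 0 := by
    have h : a * (a * b * a * b + a * b * a + b * a * b + a * b + b * a) * b
      = (a * a) * b * a * b * b + (a * a) * b * a * b + a * b * a * (b * b) + (a * a) * b * b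
        + a * b * a * b := by noncomm_ring
    rw [e] at h
    simpa [ha, hb] using h.symm
  have e2 : a * b * a = 0 := by
    have h : a * (a * b * a * b + a * b * a + b * a * b + a * b + b * a)
      = (a * a) * b * a * b + (a * a) * b * a + a * b * a * b + (a * a) * b
        + a * b * a := by noncomm_ring
    rw [e] at h
    simpa [ha, hb, e1] using h.symm
  have e3 : b * a * b = 0 := by
    have h : (a * b * a * b + a * b * a + b * a * b + a * b + b * a) * b
      = a * b * a * (b * b) + a * b * a * b + b * a * (b * b) + a * (b * b)
        + b * a * b := by noncomm_ring
    rw [e] at h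
    simpa [ha, hb, e1] using h.symm
  rw [e1, e2, e3] at e
  simp only [zero_add] at e
  exact eq_neg_of_add_eq_zero_left e

/-- `C = -(Z U)` when `(1+C)(1+U)(1+Z) = (1+Z)(1+U)` -/
lemma ring_comm {R : Type*} [Ring R] (h3 : (3 : R) = 0) (z u c : R)
    (hz : z * z = 0) (hu : u * u = 0) (hzu : z * u = -(u * z))
    (h : (1 + c) * ((1 + u) * (1 + z)) = (1 + z) * (1 + u)) : c = -(z * u) := by
  have h1 : c * ((1 + u) * (1 + z)) = z * u - u * z := by
    calc c * ((1 + u) * (1 + z)) = (1 + c) * ((1 + u) * (1 + z)) - (1 + u) * (1 + z) := by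
          noncomm_ring
      _ = z * u - u * z := by rw [h]; noncomm_ring
  have h2 : ((1 + u) * (1 + z)) * ((1 - z) * (1 - u)) = 1 := by
    calc ((1 + u) * (1 + z)) * ((1 - z) * (1 - u))
        = 1 - z * z - u * (z * z) + (z * z) * u + u * (z * z) * u - u * u := by noncomm_ring
      _ = 1 := by simp [hz, hu]
  have zuz : z * u * z = 0 := by rw [hzu]; simp [mul_assoc, hz]
  have uzu : u * z * u = 0 := by rw [mul_assoc, hzu]; simp [← mul_assoc, hu]
  calc c = c * (((1 + u) * (1 + z)) * ((1 - z) * (1 - u))) := by rw [h2, mul_one]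
    _ = (z * u - u * z) * ((1 - z) * (1 - u)) := by rw [← mul_assoc, h1]
    _ = z * u - u * z - z * u * z + u * (z * z) - z * (u * u) + u * z * u
          + (z * u * z) * u - u * (z * z) * u := by noncomm_ring
    _ = z * u - u * z := by simp [hz, hu, zuz, uzu]
    _ = 3 * (z * u) - z * u := by
        have : u * z = -(z * u) := by rw [hzu, neg_neg]
        rw [this]; noncomm_ring
    _ = -(z * u) := by rw [h3]; simp

end RingPart

section General
universe u
variable {G : Type u} [Group G]

/-- An element of a group of exponent 3 commutes with its conjugates. -/
lemma comm_conj (h3 : ∀ g : G, g ^ 3 = 1) (x g : G) : Commute x (g * x * g⁻¹) := by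
  have gg : ∀ g : G, g * g = g⁻¹ := by
    intro g
    rw [eq_inv_iff_mul_eq_one, ← h3 g, pow_succ, pow_two]
  have key : ∀ g : G, x * (g * x * g⁻¹) * (g * g * x * g⁻¹ * g⁻¹) = 1 := by
    intro g
    have h1 := h3 (x * g)
    have h2 := h3 g⁻¹
    calc _ = (x * g) ^ 3 * (g⁻¹) ^ 3 := by
          simp only [pow_succ, pow_zero, one_mul]; group
      _ = 1 := by rw [h1, h2, one_mul]
  have k1 := key g
  have k2 := key g⁻¹
  have e1 : g * g * x * g⁻¹ * g⁻¹ = g⁻¹ * x * g := by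
    rw [gg, mul_assoc (g⁻¹ * x), gg, inv_inv]
  have e2 : g⁻¹ * g⁻¹ * x * g⁻¹⁻¹ * g⁻¹⁻¹ = g * x * g⁻¹ := by
    rw [gg, inv_inv, mul_assoc (g * x), gg]
  rw [e1] at k1
  rw [e2, inv_inv] at k2
  generalize g * x * g⁻¹ = y at *
  generalize g⁻¹ * x * g = w at *
  have hw : w = y⁻¹ * x⁻¹ := by
    rw [← mul_inv_rev]; exact (inv_eq_of_mul_eq_one_right k1).symm
  subst hw
  have h4 : x * (y⁻¹ * x⁻¹) = y⁻¹ := eq_inv_of_mul_eq_one_left k2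
  have : Commute x y⁻¹ := by
    show x * y⁻¹ = y⁻¹ * x
    conv_rhs => rw [← h4]
    group
  exact Commute.inv_right_iff.mp this

lemma conj_comm' (h3 : ∀ g : G, g ^ 3 = 1) (x : G) :
    IsMulCommutative (Subgroup.normalClosure {x}) := by
  apply Subgroup.isMulCommutative_closure
  intro a ha b hb
  simp only [Group.conjugatesOfSet, Set.mem_singleton_iff, Set.iUnion_iUnion_eq_left,
    conjugatesOf, Set.mem_ofPred_eq, isConj_iff] at ha hb
  obtain ⟨c, rfl⟩ := ha
  obtain ⟨d, rfl⟩ := hb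
  have h := comm_conj h3 (c * x * c⁻¹) (d * c⁻¹)
  have e : d * c⁻¹ * (c * x * c⁻¹) * (d * c⁻¹)⁻¹ = d * x * d⁻¹ := by group
  rw [e] at h
  exact h

/-- The normal closure of `x` as a module. -/
lemma exists_module (h3 : ∀ g : G, g ^ 3 = 1) (x : G) :
    ∃ (M : Type u) (_ : AddCommGroup M) (v : M → G) (ρ : G →* AddMonoid.End M) (m : M),
      (∀ a b, v (a + b) = v a * v b) ∧ (∀ a, v (-a) = (v a)⁻¹) ∧
      (∀ g a, v (ρ g a) = g * v a * g⁻¹) ∧ Function.Injective v ∧ v m = x := by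
  have := conj_comm' h3 x
  let _ : CommGroup (Subgroup.normalClosure {x}) :=
    { (inferInstance : Group (Subgroup.normalClosure {x})) with
      mul_comm := fun a b => mul_comm' a b }
  refine ⟨Additive (Subgroup.normalClosure {x}), inferInstance,
    fun a => (a.toMul : G),
    { toFun := fun g => MonoidHom.toAdditive
        (MulAut.conjNormal (H := Subgroup.normalClosure {x}) g).toMonoidHom
      map_one' := ?_
      map_mul' := ?_ }, Additive.ofMul ⟨x, Subgroup.subset_normalClosure rfl⟩, ?_, ?_, ?_, ?_, rfl⟩
  · ext a; simp; rfl
  · intro g h; ext a; simp; rfl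
  · intro a b; rfl
  · intro a; rfl
  · intro g a; rfl
  · intro a b hab
    exact Subtype.ext hab

lemma main_ids (h3 : ∀ g : G, g ^ 3 = 1) (x : G) :
    (∀ y z : G, ⁅⁅x, z⁆, y⁆ = ⁅⁅x, y⁆, z⁆⁻¹) ∧ (∀ y : G, ⁅x⁻¹, y⁆ = ⁅x, y⁆⁻¹) ∧
    (∀ z u : G, ⁅x, ⁅z, u⁆⁆ = ⁅⁅x, u⁆, z⁆) := by
  obtain ⟨M, _, v, ρ, m, vadd, vneg, vρ, vinj, rfl⟩ := exists_module h3 x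
  have v0 : v 0 = 1 := by
    have := vadd 0 0
    simpa using this
  have vc : ∀ a g, ⁅v a, g⁆ = v (-((ρ g - 1) a)) := by
    intro a g
    have : -((ρ g - 1) a) = a + ρ g (-a) := by
      have e : (ρ g - 1) a = ρ g a - a := rfl
      rw [e, map_neg]; abel
    rw [this, vadd, vρ, vneg, commutatorElement_def]
    group
  have t3 : (3 : AddMonoid.End M) = 0 := by
    ext a
    apply vinj
    have : (3 : AddMonoid.End M) a = a + a + a := by
      have : (3 : AddMonoid.End M) = 1 + 1 + 1 := by norm_num
      rw [this]; rfl
    rw [this, vadd, vadd, (show (0 : AddMonoid.End M) a = 0 from rfl), v0, ← h3 (v a), pow_succ, pow_two]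
  have sq : ∀ g, (ρ g - 1) * (ρ g - 1) = 0 := by
    intro g
    have h : 1 + ρ g + ρ g * ρ g = 0 := by
      ext a
      apply vinj
      have : (1 + ρ g + ρ g * ρ g) a = a + ρ g a + ρ g (ρ g a) := rfl
      rw [this, vadd, vadd, vρ, vρ, vρ, (show (0 : AddMonoid.End M) a = 0 from rfl), v0]
      have h1 := h3 (v a * g)
      have h2 := h3 g⁻¹
      calc _ = (v a * g) ^ 3 * (g⁻¹) ^ 3 := by
            simp only [pow_succ, pow_zero, one_mul]; group
        _ = 1 := by rw [h1, h2, one_mul]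
    calc (ρ g - 1) * (ρ g - 1) = (1 + ρ g + ρ g * ρ g) - 3 * ρ g := by noncomm_ring
      _ = 0 := by rw [h, t3]; simp
  have anti : ∀ g h, (ρ g - 1) * (ρ h - 1) = -((ρ h - 1) * (ρ g - 1)) := by
    intro g h
    apply ring_anti _ _ (sq g) (sq h)
    have := sq (g * h)
    have e : ρ (g * h) - 1 = (ρ g - 1) * (ρ h - 1) + (ρ g - 1) + (ρ h - 1) := by
      rw [map_mul]; noncomm_ring
    rwa [e] at this
  have vcc : ∀ g h, ⁅⁅v m, g⁆, h⁆ = v (((ρ h - 1) * (ρ g - 1)) m) := by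
    intro g h
    rw [vc, vc, map_neg, neg_neg]; rfl
  refine ⟨?_, ?_, ?_⟩
  · intro y z
    rw [vcc, vcc, ← vneg, anti]; rfl
  · intro y
    rw [← vneg, vc, vc, ← vneg, map_neg]
  · intro z u
    have hc : ρ ⁅z, u⁆ - 1 = -((ρ z - 1) * (ρ u - 1)) := by
      apply ring_comm t3 _ _ _ (sq z) (sq u) (anti z u)
      simp only [add_sub_cancel]
      rw [← map_mul, ← map_mul, ← map_mul, commutatorElement_def]
      congr 1; group
    rw [vcc, vc, hc]
    congr 1
    exact neg_neg _

section consequences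

lemma T_swap23 (h3 : ∀ g : G, g ^ 3 = 1) (x y z : G) : ⁅⁅x, z⁆, y⁆ = ⁅⁅x, y⁆, z⁆⁻¹ := (main_ids h3 x).1 y z

lemma c_inv (h3 : ∀ g : G, g ^ 3 = 1) (x y : G) : ⁅x⁻¹, y⁆ = ⁅x, y⁆⁻¹ := (main_ids h3 x).2.1 y

lemma T_swap12 (h3 : ∀ g : G, g ^ 3 = 1) (x y z : G) : ⁅⁅y, x⁆, z⁆ = ⁅⁅x, y⁆, z⁆⁻¹ := by
  rw [← commutatorElement_inv x y, c_inv h3]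

lemma T_diag (h3 : ∀ g : G, g ^ 3 = 1) (x z : G) : ⁅⁅x, z⁆, z⁆ = 1 := by
  have h := T_swap23 h3 x z z
  have h1 := h3 ⁅⁅x, z⁆, z⁆
  have h2 : ⁅⁅x, z⁆, z⁆ * ⁅⁅x, z⁆, z⁆ = 1 := mul_eq_one_iff_eq_inv.mpr h
  rw [pow_succ, pow_two, h2, one_mul] at h1
  exact h1

lemma gamma4 (h3 : ∀ g : G, g ^ 3 = 1) (x y z u : G) : ⁅⁅⁅x, y⁆, z⁆, u⁆ = 1 := by
  have s34 : ∀ x y z u : G, ⁅⁅⁅x, y⁆, u⁆, z⁆ = ⁅⁅⁅x, y⁆, z⁆, u⁆⁻¹ :=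
    fun x y z u => T_swap23 h3 ⁅x, y⁆ z u
  have s23 : ∀ x y z u : G, ⁅⁅⁅x, z⁆, y⁆, u⁆ = ⁅⁅⁅x, y⁆, z⁆, u⁆⁻¹ := by
    intro x y z u
    rw [T_swap23 h3 x y z, c_inv h3]
  have s12 : ∀ x y z u : G, ⁅⁅⁅y, x⁆, z⁆, u⁆ = ⁅⁅⁅x, y⁆, z⁆, u⁆⁻¹ := by
    intro x y z u
    rw [T_swap12 h3 x y z, c_inv h3]
  have h1 : ⁅⁅x, y⁆, ⁅z, u⁆⁆ = ⁅⁅⁅x, y⁆, z⁆, u⁆⁻¹ := by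
    rw [(main_ids h3 ⁅x, y⁆).2.2 z u, s34]
  have h2 : ⁅⁅x, y⁆, ⁅z, u⁆⁆ = ⁅⁅⁅x, y⁆, z⁆, u⁆ := by
    rw [← commutatorElement_inv ⁅z, u⁆ ⁅x, y⁆, (main_ids h3 ⁅z, u⁆).2.2 x y, s34, inv_inv]
    -- (z,u,x,y) to (x,y,z,u)
    rw [s23 z x u y, s12 x z u y, s34 x z y u, s23 x y z u]
    simp
  have h := h2.symm.trans h1
  have h4 := h3 ⁅⁅⁅x, y⁆, z⁆, u⁆
  rw [pow_succ, pow_two, mul_eq_one_iff_eq_inv.mpr h, one_mul] at h4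
  exact h4

lemma T_central (h3 : ∀ g : G, g ^ 3 = 1) (x y z : G) : ⁅⁅x, y⁆, z⁆ ∈ Subgroup.center G := by
  rw [Subgroup.mem_center_iff]
  intro g
  exact (commutatorElement_eq_one_iff_mul_comm.mp (gamma4 h3 x y z g)).symm

/-- γ₃ lies in any central subgroup containing the triple commutators. -/
lemma gamma3_le (h3 : ∀ g : G, g ^ 3 = 1) (K : Subgroup G) (hK : K ≤ Subgroup.center G)
    (hT : ∀ x y z : G, ⁅⁅x, y⁆, z⁆ ∈ K) :
    Subgroup.lowerCentralSeries (⊤ : Subgroup G) 2 ≤ K := by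
  have : ∀ g ∈ Subgroup.lowerCentralSeries (⊤ : Subgroup G) 1, ∀ z : G, ⁅g, z⁆ ∈ K := by
    intro g hg
    rw [Subgroup.mem_lowerCentralSeries_succ_iff] at hg
    induction hg using Subgroup.closure_induction with
    | mem a ha =>
      obtain ⟨p, _, q, _, rfl⟩ := ha
      exact hT p q
    | one => intro z; simp [K.one_mem]
    | mul a b _ _ ha hb =>
      intro z
      have e : ⁅a * b, z⁆ = a * ⁅b, z⁆ * a⁻¹ * ⁅a, z⁆ := by
        simp only [commutatorElement_def]; group
      have c := Subgroup.mem_center_iff.mp (hK (hb z)) a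
      rw [e, c, mul_inv_cancel_right]
      exact K.mul_mem (hb z) (ha z)
    | inv a _ ha =>
      intro z
      rw [c_inv h3]
      exact K.inv_mem (ha z)
  rw [Subgroup.lowerCentralSeries_succ, Subgroup.commutator_le]
  intro g hg z _
  exact this g hg z

lemma gamma4_bot (h3 : ∀ g : G, g ^ 3 = 1) : Subgroup.lowerCentralSeries (⊤ : Subgroup G) 3 = ⊥ := by
  rw [Subgroup.lowerCentralSeries_succ, eq_bot_iff, Subgroup.commutator_le]
  intro g hg z _
  have := gamma3_le h3 (Subgroup.center G) le_rfl (T_central h3) hg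
  rw [Subgroup.mem_bot, commutatorElement_eq_one_iff_mul_comm]
  exact (Subgroup.mem_center_iff.mp this z).symm

lemma T_gen (h3 : ∀ g : G, g ^ 3 = 1) (K : Subgroup G) (S : Set G) (hS : Subgroup.closure S = ⊤)
    (hT : ∀ x ∈ S, ∀ y ∈ S, ∀ z ∈ S, ⁅⁅x, y⁆, z⁆ ∈ K) (x y z : G) : ⁅⁅x, y⁆, z⁆ ∈ K := by
  have step : ∀ x y : G, (∀ z ∈ S, ⁅⁅x, y⁆, z⁆ ∈ K) → ∀ z, ⁅⁅x, y⁆, z⁆ ∈ K := by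
    intro x y h z
    have hz : z ∈ Subgroup.closure S := by rw [hS]; trivial
    induction hz using Subgroup.closure_induction with
    | mem a ha => exact h a ha
    | one => simp [K.one_mem]
    | mul a b _ _ ha hb =>
      have e : ⁅⁅x, y⁆, a * b⁆ = ⁅⁅x, y⁆, a⁆ * (a * ⁅⁅x, y⁆, b⁆ * a⁻¹) := by
        simp only [commutatorElement_def]; group
      have c := Subgroup.mem_center_iff.mp (T_central h3 x y b) a
      rw [e, c, mul_inv_cancel_right]
      exact K.mul_mem ha hb
    | inv a _ ha =>
      have e : ⁅⁅x, y⁆, a⁻¹⁆ = ⁅a, ⁅x, y⁆⁆ := by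
        rw [← commutatorElement_inv a⁻¹, c_inv h3, inv_inv]
      rw [e, ← commutatorElement_inv]
      exact K.inv_mem ha
  have w23 : ∀ x y z : G, ⁅⁅x, y⁆, z⁆ ∈ K → ⁅⁅x, z⁆, y⁆ ∈ K := by
    intro x y z h
    rw [T_swap23 h3]; exact K.inv_mem h
  have w12 : ∀ x y z : G, ⁅⁅x, y⁆, z⁆ ∈ K → ⁅⁅y, x⁆, z⁆ ∈ K := by
    intro x y z h
    rw [T_swap12 h3]; exact K.inv_mem h
  have a1 : ∀ x ∈ S, ∀ y ∈ S, ∀ z, ⁅⁅x, y⁆, z⁆ ∈ K := fun x hx y hy => step x y (hT x hx y hy)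
  have a2 : ∀ x ∈ S, ∀ y z, ⁅⁅x, y⁆, z⁆ ∈ K := fun x hx y =>
    step x y (fun z hz => w23 _ _ _ (a1 x hx z hz y))
  exact step x y (fun z hz => w23 _ _ _ (w12 _ _ _ (a2 z hz x y))) z

end consequences
end General

/-- A concrete group of exponent 3 and order `3^7`: the exterior algebra on two
generators over `ZMod 3`, extended by the unipotent units `1 + v + w`. -/
@[ext] structure H where
  a0 : ZMod 3
  a1 : ZMod 3
  a2 : ZMod 3
  a3 : ZMod 3
  p : ZMod 3
  q : ZMod 3
  w : ZMod 3

namespace H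

instance : Mul H where
  mul x y :=
    { a0 := x.a0 + y.a0
      a1 := x.a1 + (y.a1 + x.p * y.a0)
      a2 := x.a2 + (y.a2 + x.q * y.a0)
      a3 := x.a3 + (y.a3 + x.p * y.a2 - x.q * y.a1 + x.w * y.a0)
      p := x.p + y.p
      q := x.q + y.q
      w := x.w + y.w + x.p * y.q - x.q * y.p }

instance : One H where
  one := ⟨0, 0, 0, 0, 0, 0, 0⟩

instance : Inv H where
  inv x :=
    { a0 := -x.a0
      a1 := -(x.a1 - x.p * x.a0)
      a2 := -(x.a2 - x.q * x.a0)
      a3 := -(x.a3 - x.p * x.a2 + x.q * x.a1 - x.w * x.a0)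
      p := -x.p
      q := -x.q
      w := -x.w }

lemma mul_def (x y : H) : x * y =
    { a0 := x.a0 + y.a0
      a1 := x.a1 + (y.a1 + x.p * y.a0)
      a2 := x.a2 + (y.a2 + x.q * y.a0)
      a3 := x.a3 + (y.a3 + x.p * y.a2 - x.q * y.a1 + x.w * y.a0)
      p := x.p + y.p
      q := x.q + y.q
      w := x.w + y.w + x.p * y.q - x.q * y.p } := rfl

lemma one_def : (1 : H) = ⟨0, 0, 0, 0, 0, 0, 0⟩ := rfl

lemma inv_def (x : H) : x⁻¹ =
    { a0 := -x.a0
      a1 := -(x.a1 - x.p * x.a0)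
      a2 := -(x.a2 - x.q * x.a0)
      a3 := -(x.a3 - x.p * x.a2 + x.q * x.a1 - x.w * x.a0)
      p := -x.p
      q := -x.q
      w := -x.w } := rfl

instance : Group H :=
  Group.ofLeftAxioms
    (by intro x y z; ext <;> simp only [mul_def] <;> ring)
    (by intro x; ext <;> simp only [mul_def, one_def] <;> ring)
    (by intro x; ext <;> simp only [mul_def, one_def, inv_def] <;> ring)

lemma cube (x : H) : x ^ 3 = 1 := by
  have t : (3 : ZMod 3) = 0 := rfl
  rw [pow_succ, pow_two]
  ext <;> simp only [mul_def, one_def]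
  · linear_combination x.a0 * t
  · linear_combination (x.a1 + x.p * x.a0) * t
  · linear_combination (x.a2 + x.q * x.a0) * t
  · linear_combination (x.a3 + x.p * x.a2 - x.q * x.a1 + x.w * x.a0) * t
  · linear_combination x.p * t
  · linear_combination x.q * t
  · linear_combination x.w * t

/-- generators -/
def ga : H := ⟨1, 0, 0, 0, 0, 0, 0⟩
def gb : H := ⟨0, 0, 0, 0, 1, 0, 0⟩
def gc : H := ⟨0, 0, 0, 0, 0, 1, 0⟩

lemma T_ne : ⁅⁅ga, gb⁆, gc⁆ ≠ 1 := by
  intro h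
  have := congrArg H.a3 h
  revert this
  simp only [commutatorElement_def, mul_def, one_def, inv_def, ga, gb, gc]
  decide

end H

/-- increasing triples -/
abbrev Tri : Type := {t : Fin 5 × Fin 5 × Fin 5 // t.1 < t.2.1 ∧ t.2.1 < t.2.2}

lemma card_Tri : Fintype.card Tri = 10 := by decide

lemma B_cube (g : B53) : g ^ 3 = 1 := by
  induction g using QuotientGroup.induction_on with
  | H w =>
    rw [← QuotientGroup.mk_pow, QuotientGroup.eq_one_iff]
    exact Subgroup.subset_normalClosure ⟨w, rfl⟩

/-- the generators of `B53` -/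
def gen (i : Fin 5) : B53 := QuotientGroup.mk (FreeGroup.of i)

/-- homs from `B53` to groups of exponent 3 -/
def toH (f : Fin 5 → H) : B53 →* H :=
  QuotientGroup.lift _ (FreeGroup.lift f) (by
    intro w hw
    have : Subgroup.normalClosure {w : FreeGroup (Fin 5) | ∃ v, w = v ^ 3}
        ≤ (FreeGroup.lift f).ker := by
      apply Subgroup.normalClosure_le_normal
      rintro _ ⟨v, rfl⟩
      simp [MonoidHom.mem_ker, H.cube]
    exact this hw)

lemma toH_gen (f : Fin 5 → H) (i : Fin 5) : toH f (gen i) = f i := by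
  simp [toH, gen]

lemma closure_gen : Subgroup.closure (Set.range gen) = ⊤ := by
  have : Set.range gen = (QuotientGroup.mk' (Subgroup.normalClosure
      {w : FreeGroup (Fin 5) | ∃ v, w = v ^ 3})) '' Set.range FreeGroup.of := by
    rw [← Set.range_comp]; rfl
  rw [this, ← MonoidHom.map_closure, FreeGroup.closure_range_of, ← MonoidHom.range_eq_map,
    MonoidHom.range_eq_top]
  exact QuotientGroup.mk'_surjective _

/-- basic commutators -/
def bc (t : Tri) : B53 := ⁅⁅gen t.1.1, gen t.1.2.1⁆, gen t.1.2.2⁆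

/-- detecting hom -/
def det (t : Tri) : B53 →* H :=
  toH (fun i => if i = t.1.1 then H.ga else if i = t.1.2.1 then H.gb
    else if i = t.1.2.2 then H.gc else 1)

lemma det_self (t : Tri) : det t (bc t) ≠ 1 := by
  obtain ⟨⟨i, j, k⟩, h1, h2⟩ := t
  simp only at h1 h2
  simp only [det, bc, map_commutatorElement, toH_gen]
  have e1 : j ≠ i := h1.ne'
  have e2 : k ≠ j := h2.ne'
  have e3 : k ≠ i := (h1.trans h2).ne'
  simp only [e1, e2, e3, if_true, if_false]
  exact H.T_ne

lemma tri_ne (s t : Tri) (h : s ≠ t) :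
    (s.1.1 ≠ t.1.1 ∧ s.1.1 ≠ t.1.2.1 ∧ s.1.1 ≠ t.1.2.2) ∨
    (s.1.2.1 ≠ t.1.1 ∧ s.1.2.1 ≠ t.1.2.1 ∧ s.1.2.1 ≠ t.1.2.2) ∨
    (s.1.2.2 ≠ t.1.1 ∧ s.1.2.2 ≠ t.1.2.1 ∧ s.1.2.2 ≠ t.1.2.2) := by
  obtain ⟨⟨i, j, k⟩, h1, h2⟩ := s
  obtain ⟨⟨i', j', k'⟩, h1', h2'⟩ := t
  simp only [ne_eq, Subtype.mk.injEq, Prod.mk.injEq] at *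
  change i < j at h1
  change j < k at h2
  change i' < j' at h1'
  change j' < k' at h2'
  omega

lemma det_ne (s t : Tri) (h : s ≠ t) : det t (bc s) = 1 := by
  simp only [det, bc, map_commutatorElement, toH_gen]
  rcases tri_ne s t h with ⟨h1, h2, h3⟩ | ⟨h1, h2, h3⟩ | ⟨h1, h2, h3⟩ <;> simp [h1, h2, h3]

lemma bc_order (t : Tri) : orderOf (bc t) = 3 := by
  have : Fact (Nat.Prime 3) := ⟨Nat.prime_three⟩
  apply orderOf_eq_prime (B_cube _)
  intro h
  apply det_self t
  rw [h, map_one]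

lemma det_order (t : Tri) : orderOf (det t (bc t)) = 3 := by
  have : Fact (Nat.Prime 3) := ⟨Nat.prime_three⟩
  exact orderOf_eq_prime (H.cube _) (det_self t)

lemma bc_central (t : Tri) : Subgroup.zpowers (bc t) ≤ Subgroup.center B53 := by
  rw [Subgroup.zpowers_le]
  exact T_central B_cube _ _ _

lemma indep : iSupIndep (fun t : Tri => Subgroup.zpowers (bc t)) := by
  intro t
  rw [Subgroup.disjoint_def]
  intro x hx hy
  have hk : (⨆ s, ⨆ (_ : s ≠ t), Subgroup.zpowers (bc s)) ≤ (det t).ker := by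
    refine iSup₂_le fun s hs => ?_
    rw [Subgroup.zpowers_le, MonoidHom.mem_ker]
    exact det_ne s t hs
  have h1 : det t x = 1 := hk hy
  obtain ⟨n, rfl⟩ := Subgroup.mem_zpowers_iff.mp hx
  rw [map_zpow, ← orderOf_dvd_iff_zpow_eq_one, det_order] at h1
  rw [← orderOf_dvd_iff_zpow_eq_one, bc_order]
  exact h1

lemma gamma3_eq : Subgroup.lowerCentralSeries (⊤ : Subgroup B53) 2
    = ⨆ t : Tri, Subgroup.zpowers (bc t) := by
  apply le_antisymm
  · set K := ⨆ t : Tri, Subgroup.zpowers (bc t) with hKdef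
    have hb : ∀ i j k : Fin 5, i < j → j < k → ⁅⁅gen i, gen j⁆, gen k⁆ ∈ K := by
      intro i j k h1 h2
      exact (le_iSup (fun t : Tri => Subgroup.zpowers (bc t)) ⟨(i, j, k), h1, h2⟩)
        (Subgroup.mem_zpowers _)
    have w23 : ∀ x y z : B53, ⁅⁅x, y⁆, z⁆ ∈ K → ⁅⁅x, z⁆, y⁆ ∈ K := by
      intro x y z h
      rw [T_swap23 B_cube]; exact K.inv_mem h
    have w12 : ∀ x y z : B53, ⁅⁅x, y⁆, z⁆ ∈ K → ⁅⁅y, x⁆, z⁆ ∈ K := by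
      intro x y z h
      rw [T_swap12 B_cube]; exact K.inv_mem h
    have d1 : ∀ x z : B53, ⁅⁅x, x⁆, z⁆ ∈ K := by
      intro x z; simp [K.one_mem]
    have d2 : ∀ x z : B53, ⁅⁅x, z⁆, z⁆ ∈ K := by
      intro x z; rw [T_diag B_cube]; exact K.one_mem
    have d3 : ∀ x z : B53, ⁅⁅x, z⁆, x⁆ ∈ K := fun x z => w23 _ _ _ (d1 x z)
    apply gamma3_le B_cube K (iSup_le bc_central)
    apply T_gen B_cube K (Set.range gen) closure_gen
    rintro _ ⟨i, rfl⟩ _ ⟨j, rfl⟩ _ ⟨k, rfl⟩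
    rcases lt_trichotomy i j with h1 | rfl | h1
    · rcases lt_trichotomy j k with h2 | rfl | h2
      · exact hb i j k h1 h2
      · exact d2 _ _
      · rcases lt_trichotomy i k with h | rfl | h
        · exact w23 _ _ _ (hb i k j h h2)
        · exact d3 _ _
        · exact w23 _ _ _ (w12 _ _ _ (hb k i j h h1))
    · exact d1 _ _
    · rcases lt_trichotomy i k with h2 | rfl | h2
      · exact w12 _ _ _ (hb j i k h1 h2)
      · exact d3 _ _
      · rcases lt_trichotomy j k with h | rfl | h
        · exact w12 _ _ _ (w23 _ _ _ (hb j k i h h2))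
        · exact d2 _ _
        · exact w12 _ _ _ (w23 _ _ _ (w12 _ _ _ (hb k j i h h1)))
  · refine iSup_le fun t => ?_
    rw [Subgroup.zpowers_le]
    exact Subgroup.commutator_mem_commutator
      (Subgroup.commutator_mem_commutator (Subgroup.mem_top _) (Subgroup.mem_top _))
      (Subgroup.mem_top _)

lemma card_gamma3 : Nat.card (Subgroup.lowerCentralSeries (⊤ : Subgroup B53) 2) = 3 ^ 10 := by
  have hc : Pairwise fun i j : Tri => ∀ x y : B53, x ∈ Subgroup.zpowers (bc i) →
      y ∈ Subgroup.zpowers (bc j) → Commute x y := by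
    intro i j _ x y hx _
    exact (Subgroup.mem_center_iff.mp (bc_central i hx) y).symm
  have hinj := Subgroup.injective_noncommPiCoprod_of_iSupIndep (hcomm := hc) indep
  rw [gamma3_eq, ← Subgroup.noncommPiCoprod_range (hcomm := hc),
    ← Nat.card_congr (MonoidHom.ofInjective hinj).toEquiv, Nat.card_pi]
  simp only [Nat.card_zpowers, bc_order, Finset.prod_const, Finset.card_univ, card_Tri]

end Burn

/-- For `B(5,3)`: the fourth term `γ₄` of the lower central series is trivial
(Mathlib: `lowerCentralSeries B53 3 = ⊥`, since `γ₁` has index `0`), and the third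
term `γ₃` (Mathlib: `lowerCentralSeries B53 2`) has cardinality exactly `3¹⁰`. -/
theorem B53_gamma :
    Subgroup.lowerCentralSeries (⊤ : Subgroup B53) 3 = ⊥ ∧
    Nat.card (Subgroup.lowerCentralSeries (⊤ : Subgroup B53) 2) = 3 ^ 10 := by
  exact ⟨Burn.gamma4_bot Burn.B_cube, Burn.card_gamma3⟩
end

section
/- Let G be any group in which g³ = 1 for every g ∈ G, and define t : G × G → G × G by t(a,b) = (a·b⁻¹·a, a). Then t∘t∘t is the identity map on G × G. (This is the algebraic content of the fact that Fox 3-colorings by G of a tangle are unchanged by a 3-move: applying the core-group crossing relation three times returns the original arc labels.) -/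
/-- The core-group crossing move on pairs of labels: the pair `(a, b)` (overcrossing
label `a`, incoming undercrossing label `b`) is sent to `(a·b⁻¹·a, a)`. -/
def coreMove (G : Type*) [Group G] : G × G → G × G :=
  fun p => (p.1 * p.2⁻¹ * p.1, p.1)

/-- If `G` is a group in which `g³ = 1` for every `g`, then applying the
core-group crossing move three times is the identity on `G × G`: Fox 3-colorings
by `G` of a tangle are unchanged by a 3-move. -/
theorem coreMove_cube_eq_id (G : Type*) [Group G] (h : ∀ g : G, g ^ 3 = 1) :
    coreMove G ∘ coreMove G ∘ coreMove G = id := by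
  funext p
  obtain ⟨a, b⟩ := p
  have hx := h (a * b⁻¹)
  have key : coreMove G (coreMove G (coreMove G (a, b))) =
      ((a * b⁻¹) ^ 3 * a, (a * b⁻¹) ^ 3 * b) := by
    simp only [coreMove, Prod.mk.injEq]
    constructor <;> simp only [pow_succ, pow_zero, one_mul, mul_inv_rev, inv_inv, mul_assoc,
      mul_inv_cancel_left, inv_mul_cancel_left, inv_mul_cancel, mul_inv_cancel, mul_one]
  simp only [Function.comp_apply, id]
  rw [key, hx, one_mul, one_mul]
end

section
/- Every group G in which g³ = 1 for every g ∈ G satisfies the identity [[a,b],b] = 1 for all a, b ∈ G, where [a,b] = a b a⁻¹ b⁻¹. -/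
open scoped commutatorElement

/-- In every group of exponent dividing 3 (`g³ = 1` for all `g`), the identity
`[[a,b],b] = 1` holds, where `⁅a, b⁆ = a * b * a⁻¹ * b⁻¹`. -/
theorem exponent_three_commutator (G : Type*) [Group G] (h : ∀ g : G, g ^ 3 = 1)
    (a b : G) : ⁅⁅a, b⁆, b⁆ = 1 := by
  have key : ∀ x : G, (x * b * x⁻¹) * (x⁻¹ * b * x) * b = 1 := by
    intro x
    have hx : x⁻¹ * x⁻¹ = x := by
      have := h x
      rw [pow_succ, pow_two] at this
      rw [← mul_inv_rev]
      exact inv_eq_of_mul_eq_one_right this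
    calc (x * b * x⁻¹) * (x⁻¹ * b * x) * b = x * b * (x⁻¹ * x⁻¹) * b * x * b := by group
      _ = x * b * x * b * x * b := by rw [hx]
      _ = (x * b) ^ 3 := by simp only [pow_succ, pow_zero, one_mul, mul_assoc]
      _ = 1 := h _
  have h1 := key a
  have h2 := key a⁻¹
  rw [inv_inv] at h2
  have hc : Commute (a * b * a⁻¹) b := by
    generalize a * b * a⁻¹ = c at *
    generalize a⁻¹ * b * a = d at *
    have e1 : b * c = d⁻¹ := by
      have : b * (c * d) = 1 := by
        rw [eq_inv_of_mul_eq_one_left h1, mul_inv_cancel]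
      rw [← mul_assoc] at this
      exact eq_inv_of_mul_eq_one_left this
    have e2 : c * b = d⁻¹ := by
      rw [mul_assoc] at h2
      exact eq_inv_of_mul_eq_one_right h2
    exact e2.trans e1.symm
  rw [commutatorElement_eq_one_iff_commute, commutatorElement_def]
  exact hc.mul_left (Commute.refl b).inv_left
end

section
/- Every group G in which g³ = 1 for every g ∈ G is nilpotent of class at most 3: the identity [[[a,b],c],d] = 1 holds for all a,b,c,d ∈ G (equivalently, the fourth term γ₄(G) of the lower central series is trivial). -/
open scoped commutatorElement

namespace ExpThree

variable {G : Type*} [Group G]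

/-- In exponent three, each element commutes with its conjugates. -/
lemma comm_conj (h : ∀ g : G, g ^ 3 = 1) (x y : G) : Commute x (y * x * y⁻¹) := by
  have hy : y * y = y⁻¹ := by
    have := h y
    rw [pow_succ, pow_two] at this
    exact eq_inv_of_mul_eq_one_left this
  have h1 : x * (y * x * y⁻¹) * (y⁻¹ * x * y) = 1 := by
    have := h (x * y)
    have e : y⁻¹ * y⁻¹ = y := by rw [← mul_inv_rev, hy, inv_inv]
    calc _ = x * y * x * (y⁻¹ * y⁻¹) * x * y := by group
      _ = (x * y) ^ 3 := by rw [e]; simp only [pow_succ, pow_zero, one_mul, mul_assoc]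
      _ = 1 := this
  have h2 : x * (y⁻¹ * x * y) * (y * x * y⁻¹) = 1 := by
    have := h (x * y⁻¹)
    calc _ = x * y⁻¹ * x * (y * y) * x * y⁻¹ := by group
      _ = (x * y⁻¹) ^ 3 := by rw [hy]; simp only [pow_succ, pow_zero, one_mul, mul_assoc]
      _ = 1 := this
  have e1 : x⁻¹ = (y * x * y⁻¹) * (y⁻¹ * x * y) := inv_eq_of_mul_eq_one_right (by rw [← mul_assoc, h1])
  have e2 : x⁻¹ = (y⁻¹ * x * y) * (y * x * y⁻¹) := inv_eq_of_mul_eq_one_right (by rw [← mul_assoc, h2])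
  have hc : Commute (y * x * y⁻¹) (y⁻¹ * x * y) := e1.symm.trans e2
  have : Commute (x⁻¹) (y * x * y⁻¹) := by
    rw [e1]
    exact (Commute.refl _).mul_left hc.symm
  exact Commute.inv_left_iff.mp this

lemma comm_conj2 (h : ∀ g : G, g ^ 3 = 1) (x a b : G) :
    Commute (a * x * a⁻¹) (b * x * b⁻¹) := by
  have := (comm_conj h (a * x * a⁻¹) (b * a⁻¹))
  convert this using 1
  group

lemma engel_right (h : ∀ g : G, g ^ 3 = 1) (x y : G) : Commute ⁅x, y⁆ y := by
  rw [commutatorElement_def]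
  exact (comm_conj h y x).symm.mul_left (Commute.refl y).inv_left

lemma engel_left (h : ∀ g : G, g ^ 3 = 1) (x y : G) : Commute ⁅x, y⁆ x := by
  rw [← commutatorElement_inv]
  exact (engel_right h y x).inv_left

lemma inv_left (h : ∀ g : G, g ^ 3 = 1) (x y : G) : ⁅x⁻¹, y⁆ = ⁅x, y⁆⁻¹ := by
  have := (engel_left h x y).inv_left
  have e : ⁅x⁻¹, y⁆ = x⁻¹ * (⁅x, y⁆⁻¹ * x) := by
    simp only [commutatorElement_def]; group
  rw [e, this.eq]; group

/-- Ring computation behind skew symmetry. -/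
lemma ring_aux {R : Type*} [Ring R] (Y Z : R) (hY : Y * Y = 0) (hZ : Z * Z = 0)
    (hW : (Y + Z - Y * Z) * (Y + Z - Y * Z) = 0) : Z * Y = - (Y * Z) := by
  have hY' : ∀ r, Y * (Y * r) = 0 := fun r => by rw [← mul_assoc, hY, zero_mul]
  have h1 : Y * ((Y + Z - Y * Z) * (Y + Z - Y * Z)) = 0 := by rw [hW, mul_zero]
  have h2 : ((Y + Z - Y * Z) * (Y + Z - Y * Z)) * Z = 0 := by rw [hW, zero_mul]
  have h3 : Y * ((Y + Z - Y * Z) * (Y + Z - Y * Z)) * Z = 0 := by rw [hW, mul_zero, zero_mul]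
  simp only [mul_add, add_mul, mul_sub, sub_mul, mul_assoc, hY, hZ, hY', mul_zero,
    add_zero, zero_add, sub_zero] at hW h1 h2 h3
  grind

lemma closure_comm (h : ∀ g : G, g ^ 3 = 1) (x : G) (a b : G)
    (ha : a ∈ Subgroup.normalClosure {x}) (hb : b ∈ Subgroup.normalClosure {x}) :
    a * b = b * a := by
  have key : ∀ s ∈ Group.conjugatesOfSet {x}, ∀ t ∈ Group.conjugatesOfSet {x}, s * t = t * s := by
    intro s hs t ht
    simp only [Group.mem_conjugatesOfSet_iff, Set.mem_singleton_iff, exists_eq_left,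
      isConj_iff] at hs ht
    obtain ⟨c, rfl⟩ := hs
    obtain ⟨d, rfl⟩ := ht
    exact comm_conj2 h x c d
  have hm := Subgroup.isMulCommutative_closure key
  exact congrArg Subtype.val (hm.is_comm.comm (⟨a, ha⟩ : Subgroup.closure _) ⟨b, hb⟩)

/-- The commutator `⁅⁅x, y⁆, z⁆` is skew in `y, z`. -/
lemma skew (h : ∀ g : G, g ^ 3 = 1) (x y z : G) : ⁅⁅x, y⁆, z⁆ = ⁅⁅x, z⁆, y⁆⁻¹ := by
  let A := Subgroup.normalClosure {x}
  let _ : CommGroup A :=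
    { (inferInstance : Group A) with
      mul_comm := fun a b => Subtype.ext (closure_comm h x a b a.2 b.2) }
  let φ : G → AddMonoid.End (Additive A) := fun g =>
    MonoidHom.toAdditive (MulAut.conjNormal g : MulAut A).toMonoidHom
  have hφ : ∀ g (a : Additive A), ((Additive.toMul (φ g a) : A) : G)
      = g * (Additive.toMul a : A) * g⁻¹ := fun g a => MulAut.conjNormal_apply g _
  have hD : ∀ g (a : Additive A), ((Additive.toMul ((1 - φ g) a) : A) : G)
      = ⁅((Additive.toMul a : A) : G), g⁆ := by
    intro g a
    have : Additive.toMul ((1 - φ g) a) = (Additive.toMul a) * (Additive.toMul (φ g a))⁻¹ := by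
      rw [← div_eq_mul_inv]; rfl
    rw [this]
    have e : (((Additive.toMul a) * (Additive.toMul (φ g a))⁻¹ : A) : G) =
      (Additive.toMul a : A) * ((Additive.toMul (φ g a) : A) : G)⁻¹ := rfl
    rw [e, hφ, commutatorElement_def]; group
  have hext : ∀ a b : Additive A, ((Additive.toMul a : A) : G) = (Additive.toMul b : A) → a = b :=
    fun a b hab => Additive.toMul.injective (Subtype.ext hab)
  have hsq : ∀ g, (1 - φ g) * (1 - φ g) = 0 := by
    intro g
    ext1 a
    apply hext
    rw [AddMonoid.End.coe_mul, Function.comp_apply, hD, hD]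
    exact commutatorElement_eq_one_iff_commute.mpr (engel_right h _ g)
  have hmul : φ (y * z) = φ y * φ z := by
    ext1 a
    apply hext
    rw [AddMonoid.End.coe_mul, Function.comp_apply, hφ, hφ, hφ]; group
  have hW := hsq (y * z)
  have e : 1 - φ (y * z) = (1 - φ y) + (1 - φ z) - (1 - φ y) * (1 - φ z) := by
    rw [hmul]; simp only [mul_sub, sub_mul, mul_one, one_mul]; abel
  rw [e] at hW
  have main := ring_aux _ _ (hsq y) (hsq z) hW
  let a : Additive A := Additive.ofMul ⟨x, Subgroup.subset_normalClosure rfl⟩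
  have m := congrArg (fun f : AddMonoid.End (Additive A) => ((Additive.toMul (f a) : A) : G)) main
  have e1 : ((Additive.toMul (((1 - φ z) * (1 - φ y)) a) : A) : G) = ⁅⁅x, y⁆, z⁆ := by
    rw [AddMonoid.End.coe_mul, Function.comp_apply, hD, hD]; rfl
  have e2 : ((Additive.toMul (((1 - φ y) * (1 - φ z)) a) : A) : G) = ⁅⁅x, z⁆, y⁆ := by
    rw [AddMonoid.End.coe_mul, Function.comp_apply, hD, hD]; rfl
  rw [← e1, ← e2]
  exact m

lemma four (h : ∀ g : G, g ^ 3 = 1) (a b c d : G) : ⁅⁅⁅a, b⁆, c⁆, d⁆ = 1 := by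
  have s12 : ∀ x y z : G, ⁅⁅x, y⁆, z⁆ = ⁅⁅y, x⁆, z⁆⁻¹ := fun x y z => by
    rw [← inv_left h, commutatorElement_inv]
  have cyc : ∀ x y z : G, ⁅⁅x, y⁆, z⁆ = ⁅⁅y, z⁆, x⁆ := fun x y z => by
    rw [s12, skew h, inv_inv]
  have t12 : ∀ x y z w : G, ⁅⁅⁅x, y⁆, z⁆, w⁆ = ⁅⁅⁅y, x⁆, z⁆, w⁆⁻¹ := fun x y z w => by
    rw [s12 x y z, inv_left h]
  have t23 : ∀ x y z w : G, ⁅⁅⁅x, y⁆, z⁆, w⁆ = ⁅⁅⁅x, z⁆, y⁆, w⁆⁻¹ := fun x y z w => by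
    rw [skew h x y z, inv_left h]
  have t34 : ∀ x y z w : G, ⁅⁅⁅x, y⁆, z⁆, w⁆ = ⁅⁅⁅x, y⁆, w⁆, z⁆⁻¹ := fun x y z w => skew h _ z w
  -- even permutation
  have p : ⁅⁅⁅a, b⁆, c⁆, d⁆ = ⁅⁅⁅c, d⁆, a⁆, b⁆ := by
    rw [t23 a b c d, t12 a c b d, t34 c a b d, t23 c a d b]; simp only [inv_inv]
  have q1 : ⁅⁅⁅a, b⁆, c⁆, d⁆ = ⁅⁅c, d⁆, ⁅a, b⁆⁆ := cyc _ _ _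
  have q2 : ⁅⁅⁅c, d⁆, a⁆, b⁆ = ⁅⁅a, b⁆, ⁅c, d⁆⁆ := cyc _ _ _
  have q3 : ⁅⁅⁅a, b⁆, c⁆, d⁆ = ⁅⁅⁅a, b⁆, c⁆, d⁆⁻¹ := by
    conv_rhs => rw [p, q2, commutatorElement_inv]
    exact q1
  have h3 := h ⁅⁅⁅a, b⁆, c⁆, d⁆
  generalize ⁅⁅⁅a, b⁆, c⁆, d⁆ = f at q3 h3
  have : f * f = 1 := by nth_rw 1 [q3]; exact inv_mul_cancel f
  rwa [pow_succ, pow_two, this, one_mul] at h3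

end ExpThree

/-- Every group of exponent dividing 3 (`g³ = 1` for all `g`) is nilpotent of class
at most 3: `[[[a,b],c],d] = 1` for all `a, b, c, d` (where `⁅a, b⁆ = a * b * a⁻¹ * b⁻¹`),
equivalently the fourth term `γ₄(G)` of the lower central series is trivial
(Mathlib: `lowerCentralSeries G 3 = ⊥`, since `γ₁` has index `0`). -/
theorem exponent_three_nilpotent (G : Type*) [Group G] (h : ∀ g : G, g ^ 3 = 1) :
    (∀ a b c d : G, ⁅⁅⁅a, b⁆, c⁆, d⁆ = 1) ∧ (⊤ : Subgroup G).lowerCentralSeries 3 = ⊥ := by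
  refine ⟨ExpThree.four h, ?_⟩
  have z1 : ∀ a b c : G, ⁅⁅a, b⁆, c⁆ ∈ Subgroup.center G := fun a b c =>
    Subgroup.mem_center_iff.mpr fun g =>
      (commutatorElement_eq_one_iff_mul_comm.mp (ExpThree.four h a b c g)).symm
  have z2 : ∀ a b : G, ⁅a, b⁆ ∈ Subgroup.upperCentralSeries G 2 := by
    intro a b
    rw [Subgroup.mem_upperCentralSeries_succ_iff]
    intro c
    rw [Subgroup.upperCentralSeries_one]
    exact z1 a b c
  have l1 : (⊤ : Subgroup G).lowerCentralSeries 1 ≤ Subgroup.upperCentralSeries G 2 :=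
    Subgroup.commutator_le.mpr fun a _ b _ => z2 a b
  have l2 : (⊤ : Subgroup G).lowerCentralSeries 2 ≤ Subgroup.center G := by
    refine Subgroup.commutator_le.mpr fun a ha b _ => ?_
    have := Subgroup.mem_upperCentralSeries_succ_iff.mp (l1 ha) b
    rwa [Subgroup.upperCentralSeries_one] at this
  rw [eq_bot_iff]
  refine Subgroup.commutator_le.mpr fun a ha b _ => ?_
  rw [Subgroup.mem_bot, commutatorElement_eq_one_iff_mul_comm]
  exact (Subgroup.mem_center_iff.mp (l2 ha) b).symm
end
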